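/- arXiv:1907.05335 — 5 statements merged into one kernel-verified Lean document; each statement's English description precedes it below -/
import Mathlib

section
/- Suppose i > j and let d = gcd(i,j). Then in R(A;i,j) one has x^{((i+j)/d − 1)(i−j)} = Σ_{k=1}^{(i+j)/d − 1} (−1)^{k+1}·x^{((i+j)/d − 1 − k)(i−j)}. -/
/-- The defining relations for `R(A;i,j)`: `x^i*y + y*x^j = 1` and `y^2 = 0`,
where `x` and `y` are the two generators of the free algebra. -/
inductive MatRel (A : Type*) [CommRing A] (i j : ℕ) :
    FreeAlgebra A (Fin 2) → FreeAlgebra A (Fin 2) → Prop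
  | rel1 : MatRel A i j
      (FreeAlgebra.ι A (0 : Fin 2) ^ i * FreeAlgebra.ι A (1 : Fin 2) +
        FreeAlgebra.ι A (1 : Fin 2) * FreeAlgebra.ι A (0 : Fin 2) ^ j) 1
  | rel2 : MatRel A i j (FreeAlgebra.ι A (1 : Fin 2) ^ 2) 0

/-- `R(A;i,j)`, the quotient of the free `A`-algebra on `x, y` by the two-sided ideal
generated by `x^i*y + y*x^j - 1` and `y^2`. -/
abbrev MatRing (A : Type*) [CommRing A] (i j : ℕ) : Type _ := RingQuot (MatRel A i j)

/-- The image of the generator `x` in `R(A;i,j)`. -/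
noncomputable def Xgen (A : Type*) [CommRing A] (i j : ℕ) : MatRing A i j :=
  RingQuot.mkAlgHom A (MatRel A i j) (FreeAlgebra.ι A (0 : Fin 2))

/-- The image of the generator `y` in `R(A;i,j)`. -/
noncomputable def Ygen (A : Type*) [CommRing A] (i j : ℕ) : MatRing A i j :=
  RingQuot.mkAlgHom A (MatRel A i j) (FreeAlgebra.ι A (1 : Fin 2))

section SwapRelation

variable {R : Type*} [Ring R] {p q y : R}

/-- The relation `p * y + y * q = 1` with `y ^ 2 = 0` and commuting `p`, `q` is symmetric under
exchanging `p` and `q`. -/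
lemma swap_relation (hy : y * y = 0) (hpq : p * q = q * p) (h : p * y + y * q = 1) :
    q * y + y * p = 1 := by
  have hp : y * p * y = y := by
    linear_combination (norm := noncomm_ring) y * h - hy * q
  have hq : y * q * y = y := by
    linear_combination (norm := noncomm_ring) h * y - p * hy
  have h0 : y * p * q * y = 0 := by
    linear_combination (norm := noncomm_ring) y * hpq * y + y * q * h - hq * q
  have h1 : y * p * p * y + y * q * q * y = 0 := by
    linear_combination (norm := noncomm_ring) h0 - y * p * p * hq - hp * q * q * y + y * p * h * q * y
  linear_combination (norm := noncomm_ring) h1 - h * q * y - y * p * h + h + hp * q + p * hq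

lemma mul_central (hpq : p * q = q * p) (h : p * y + y * q = 1) (h' : q * y + y * p = 1) :
    p * q * y = y * (p * q) := by
  linear_combination (norm := noncomm_ring) p * h' - h * p - y * hpq

lemma sub_central (h : p * y + y * q = 1) (h' : q * y + y * p = 1) :
    (p - q) * y = y * (p - q) := by
  linear_combination (norm := noncomm_ring) h - h'

lemma commutator_sq (hy : y * y = 0) (h : p * y + y * q = 1) :
    (p * y - y * p) * (p * y - y * p) = 1 := by
  have hp : y * p * y = y := by
    linear_combination (norm := noncomm_ring) y * h - hy * q
  linear_combination (norm := noncomm_ring) h + p * hp - p * hy * p - y * p * h + hp * q + hp * p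

lemma mul_commutator (hpq : p * q = q * p) (h : p * y + y * q = 1) (h' : q * y + y * p = 1) :
    p * (p * y - y * p) = -((p * y - y * p) * q) := by
  linear_combination (norm := noncomm_ring) p * h - p * h' + mul_central hpq h h'

lemma mul_commutator' (hpq : p * q = q * p) (h : p * y + y * q = 1) (h' : q * y + y * p = 1) :
    q * (p * y - y * p) = -((p * y - y * p) * p) := by
  linear_combination (norm := noncomm_ring)
    mul_central hpq h h' - hpq * y + sub_central h h' * p + y * hpq

end SwapRelation

section Powers

variable {R : Type*} [Ring R]

/-- If `r` divides a power of `s`, and `r`, `s` generate the unit ideal, then `r` is a unit,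
provided that `r` and `s` commute with everything in sight. -/
lemma isUnit_of_commute {r s u v k : R} (hrs : Commute r s) (hru : Commute r u)
    (hrv : Commute r v) (hsv : Commute s v) (hrk : Commute r k) (N : ℕ)
    (h : 1 = r * u + s * v) (hN : s ^ N = r * k) : IsUnit r := by
  have key : ∀ n : ℕ, ∃ a b : R, Commute r a ∧ Commute r b ∧ Commute s b ∧
      1 = r * a + s ^ n * b := by
    intro n
    induction n with
    | zero =>
      exact ⟨0, 1, Commute.zero_right _, Commute.one_right _, Commute.one_right _, by simp⟩
    | succ n ih =>
      obtain ⟨a, b, ha, hb, hsb, hab⟩ := ih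
      have hc : Commute r (s ^ n * b) := (hrs.pow_right n).mul_right hb
      refine ⟨a + s ^ n * b * u, b * v, ha.add_right (hc.mul_right hru), hb.mul_right hrv,
        hsb.mul_right hsv, ?_⟩
      have e1 : s ^ n * b * (r * u) = r * (s ^ n * b * u) := by
        rw [← mul_assoc, ← hc.eq, mul_assoc]
      have e2 : s ^ n * b * (s * v) = s ^ (n + 1) * (b * v) := by
        rw [pow_succ, mul_assoc, ← mul_assoc b, ← hsb.eq]; simp only [mul_assoc]
      calc (1 : R) = r * a + s ^ n * b * 1 := by rw [mul_one]; exact hab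
        _ = r * a + s ^ n * b * (r * u + s * v) := by rw [← h]
        _ = _ := by rw [mul_add, e1, e2, mul_add, add_assoc]
  obtain ⟨a, b, ha, hb, -, hab⟩ := key N
  have e : r * (a + k * b) = 1 := by rw [mul_add, ← mul_assoc, ← hN, ← hab]
  exact ⟨⟨r, a + k * b, e, by rw [← (ha.add_right (hrk.mul_right hb)).eq, e]⟩, rfl⟩

lemma isUnit_of_relation {x y : R} {i j : ℕ} (hj : 1 ≤ j) (hij : j < i)
    (h : x ^ i * y + y * x ^ j = 1)
    (hr : Commute (x ^ (i + j)) y) (hs : Commute (x ^ i - x ^ j) y) :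
    IsUnit x := by
  obtain ⟨m, rfl⟩ : ∃ m, i = j + m := ⟨i - j, by omega⟩
  have hrc : ∀ w, Commute x w → Commute (x ^ (j + m + j)) w := fun w hw => hw.pow_left _
  have hsc : ∀ w, Commute x w → Commute (x ^ (j + m) - x ^ j) w := fun w hw =>
    (hw.pow_left _).sub_left (hw.pow_left _)
  have hxx : ∀ n, Commute x (x ^ n) := fun n => Commute.self_pow x n
  have hsx : Commute x (x ^ (j + m) - x ^ j) := (hxx _).sub_right (hxx _)
  set r := x ^ (j + m + j) with hrdef
  set s := x ^ (j + m) - x ^ j with hsdef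
  have hQ : ∀ k : ℕ, ∃ v : R, Commute x v ∧ x ^ j = x ^ (j + m * k) + s * v := by
    intro k
    induction k with
    | zero => exact ⟨0, Commute.zero_right _, by simp⟩
    | succ k ih =>
      obtain ⟨v, hxv, hv⟩ := ih
      refine ⟨v - x ^ (m * k), hxv.sub_right (hxx _), ?_⟩
      have : s * x ^ (m * k) = x ^ (j + m * (k + 1)) - x ^ (j + m * k) := by
        rw [hsdef, sub_mul, ← pow_add, ← pow_add]; congr 2; ring
      rw [mul_sub, this]; nth_rw 1 [hv]; abel
  obtain ⟨v, hxv, hv⟩ := hQ (j + m)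
  have hle : j + m + j ≤ j + m * (j + m) := by nlinarith
  obtain ⟨e, he⟩ := Nat.exists_eq_add_of_le hle
  rw [he, pow_add, ← hrdef] at hv
  have hunit : (1 : R) = r * (x ^ e * x ^ m * y + y * x ^ e) + s * (v * x ^ m * y + y * v) := by
    calc (1 : R) = x ^ j * x ^ m * y + y * x ^ j := by rw [← h, pow_add]
      _ = _ := by
        rw [hv]
        linear_combination (norm := noncomm_ring) -hr.eq * x ^ e - hs.eq * v
  have hpow : s ^ (j + m + j) = r * (x ^ ((j - 1) * (j + m + j)) * (x ^ m - 1) ^ (j + m + j)) := by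
    have e1 : s = x ^ j * (x ^ m - 1) := by rw [hsdef, mul_sub, ← pow_add, mul_one]
    have c : Commute (x ^ j) (x ^ m - 1) :=
      ((Commute.refl x).pow_pow j m).sub_right (Commute.one_right _)
    rw [e1, c.mul_pow, ← mul_assoc, hrdef, ← pow_add, ← pow_mul]
    congr 2
    obtain ⟨j, rfl⟩ : ∃ l, j = l + 1 := ⟨j - 1, by omega⟩
    simp only [Nat.add_sub_cancel]; ring
  have hu : Commute r (x ^ e * x ^ m * y + y * x ^ e) :=
    ((hrc _ ((hxx _).mul_right (hxx _))).mul_right hr).add_right (hr.mul_right (hrc _ (hxx _)))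
  have hrv : Commute r (v * x ^ m * y + y * v) :=
    ((hrc _ (hxv.mul_right (hxx _))).mul_right hr).add_right (hr.mul_right (hrc _ hxv))
  have hsv : Commute s (v * x ^ m * y + y * v) :=
    ((hsc _ (hxv.mul_right (hxx _))).mul_right hs).add_right (hs.mul_right (hsc _ hxv))
  have hk : Commute r (x ^ ((j - 1) * (j + m + j)) * (x ^ m - 1) ^ (j + m + j)) :=
    hrc _ ((hxx _).mul_right (((hxx _).sub_right (Commute.one_right _)).pow_right _))
  exact (isUnit_pow_iff (by omega)).1
    (isUnit_of_commute (hrc _ hsx) hu hrv hsv hk _ hunit hpow)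

/-- If `[x, y] = β * g` and `g * x = x' * g`, then `[x ^ n, y]` is `β` times the geometric sum
in `x` and `x'` times `g`. -/
lemma commutator_pow {x x' y g β : R} (hβ : Commute β x) (hg : g * x = x' * g)
    (h : x * y - y * x = β * g) (n : ℕ) :
    x ^ n * y - y * x ^ n = β * (∑ l ∈ Finset.range n, x ^ l * x' ^ (n - 1 - l)) * g := by
  induction n with
  | zero => simp
  | succ n ih =>
    have hs : ∑ l ∈ Finset.range (n + 1), x ^ l * x' ^ (n + 1 - 1 - l)
        = (∑ l ∈ Finset.range n, x ^ l * x' ^ (n - 1 - l)) * x' + x ^ n := by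
      rw [Finset.sum_range_succ, Finset.sum_mul]
      simp only [Nat.add_sub_cancel, Nat.sub_self, pow_zero, mul_one]
      congr 1
      refine Finset.sum_congr rfl fun l hl => ?_
      rw [Finset.mem_range] at hl
      rw [mul_assoc, ← pow_succ]; congr 2; omega
    rw [hs]
    have hb := (hβ.pow_right n).eq
    rw [pow_succ]
    linear_combination (norm := noncomm_ring) x ^ n * h + ih * x - hb * g +
      β * (∑ l ∈ Finset.range n, x ^ l * x' ^ (n - 1 - l)) * hg

lemma sum_pow_mul_of_coprime {w : R} {n j : ℕ} (hn : 0 < n) (hw : w ^ n = 1)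
    (h : Nat.Coprime n j) :
    ∑ l ∈ Finset.range n, w ^ (j * l) = ∑ l ∈ Finset.range n, w ^ l := by
  have hmod : ∀ k, w ^ (k % n) = w ^ k := fun k => by
    conv_rhs => rw [← Nat.mod_add_div k n, pow_add, pow_mul, hw, one_pow, mul_one]
  have hmaps : ∀ l ∈ Finset.range n, j * l % n ∈ Finset.range n := fun l _ =>
    Finset.mem_range.2 (Nat.mod_lt _ hn)
  have hinj : Set.InjOn (fun l => j * l % n) (Finset.range n) := by
    intro a ha b hb hab
    have : a ≡ b [MOD n] := Nat.ModEq.cancel_left_of_coprime h hab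
    simp only [Finset.coe_range, Set.mem_Iio] at ha hb
    rwa [Nat.ModEq, Nat.mod_eq_of_lt ha, Nat.mod_eq_of_lt hb] at this
  refine Finset.sum_bij (fun l _ => j * l % n) hmaps
    (fun a ha b hb hab => hinj (Finset.mem_coe.2 ha) (Finset.mem_coe.2 hb) hab)
    (fun b hb => ?_) (fun a _ => (hmod _).symm)
  obtain ⟨a, ha, hab⟩ := Finset.surj_on_of_inj_on_of_card_le (fun l _ => j * l % n) hmaps
    (fun a b ha hb hab => hinj (Finset.mem_coe.2 ha) (Finset.mem_coe.2 hb) hab) le_rfl b hb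
  exact ⟨a, ha, hab.symm⟩

lemma exists_mul_eq_mul_add_one {i j : ℕ} (hi : 1 ≤ i) (hj : 1 ≤ j) (h : Nat.Coprime i j) :
    ∃ a c, i * a = j * c + 1 := by
  rcases hj.eq_or_lt with rfl | hj
  · exact ⟨1, i - 1, by omega⟩
  · obtain ⟨a, -, ha⟩ := Nat.exists_mul_mod_eq_one_of_coprime h hj
    exact ⟨a, i * a / j, by rw [← ha]; exact (Nat.div_add_mod _ _).symm⟩

lemma commute_of_isUnit_mul {u a w : R} (hu : IsUnit u) (hwu : Commute w u)
    (h : Commute w (u * a)) : Commute w a := by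
  refine hu.mul_left_cancel ?_
  rw [← mul_assoc, ← hwu.eq, mul_assoc, h.eq, mul_assoc]

/-- The alternating sum of the powers of `x ^ (i - j)` vanishes for coprime `i` and `j`. -/
theorem sum_neg_pow_eq_zero {x y : R} {i j : ℕ} (hj : 1 ≤ j) (hij : j < i)
    (hco : Nat.Coprime i j) (hy : y * y = 0) (h : x ^ i * y + y * x ^ j = 1) :
    ∑ l ∈ Finset.range (i + j), (-x ^ (i - j)) ^ l = 0 := by
  have hpq : x ^ i * x ^ j = x ^ j * x ^ i := by rw [← pow_add, ← pow_add, add_comm]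
  have h' := swap_relation hy hpq h
  have hz : x ^ (i + j) * y = y * x ^ (i + j) := by
    rw [pow_add]; exact mul_central hpq h h'
  have hs := sub_central h h'
  have hx : IsUnit x := isUnit_of_relation hj hij h hz hs
  set g := x ^ i * y - y * x ^ i with hgdef
  have hg : g * g = 1 := commutator_sq hy h
  have hpg : x ^ i * g = -(g * x ^ j) := mul_commutator hpq h h'
  have hqg : x ^ j * g = -(g * x ^ i) := mul_commutator' hpq h h'
  set x' := g * x * g with hx'def
  have hpow' : ∀ n, x' ^ n = g * x ^ n * g := by
    intro n
    induction n with
    | zero => simp [hg]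
    | succ n ih =>
      rw [pow_succ, ih, hx'def, pow_succ]
      linear_combination (norm := noncomm_ring) g * x ^ n * hg * x * g
  have hgx : g * x = x' * g := by
    rw [hx'def, mul_assoc, hg, mul_one]
  have hx'i : x' ^ i = -x ^ j := by
    rw [hpow', mul_assoc, hpg]
    linear_combination (norm := noncomm_ring) -hg * x ^ j
  have hx'j : x' ^ j = -x ^ i := by
    rw [hpow', mul_assoc, hqg]
    linear_combination (norm := noncomm_ring) -hg * x ^ i
  obtain ⟨a, c, hac⟩ := exists_mul_eq_mul_add_one (hj.trans hij.le) hj hco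
  have hcomm : ∀ w, Commute w x → Commute w x' := by
    intro w hw
    refine commute_of_isUnit_mul (u := (-x ^ i) ^ c) ((hx.pow i).neg.pow c)
      ((hw.pow_right i).neg_right.pow_right c) ?_
    have : (-x ^ i) ^ c * x' = (-x ^ j) ^ a := by
      rw [← hx'j, ← hx'i, ← pow_mul, ← pow_mul, ← pow_succ, hac]
    rw [this]
    exact (hw.pow_right j).neg_right.pow_right a
  have hxx' : Commute x x' := hcomm x (Commute.refl x)
  set β := (x * y - y * x) * g with hβdef
  have hxy : x * y - y * x = β * g := by
    rw [hβdef, mul_assoc, hg, mul_one]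
  have hβ : Commute β x := by
    have hgi : g * x ^ i = -x ^ j * g := by rw [neg_mul, hqg, neg_neg]
    have hgj : g * x ^ j = -x ^ i * g := by rw [neg_mul, hpg, neg_neg]
    have hP := commutator_pow (Commute.one_left _) hgi (one_mul g).symm a
    have hQ := commutator_pow (Commute.one_left _) hgj
      (show x ^ j * y - y * x ^ j = 1 * g by
        rw [one_mul, hgdef]; linear_combination (norm := noncomm_ring) -hs) c
    have hsum : ∀ (k l n : ℕ),
        Commute x (∑ t ∈ Finset.range n, (x ^ k) ^ t * (-x ^ l) ^ (n - 1 - t)) := fun k l n =>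
      Commute.sum_right _ _ _ fun t _ => ((Commute.self_pow x k).pow_right t).mul_right
        ((Commute.self_pow x l).neg_right.pow_right _)
    have hcP := hsum i j a
    have hcQ := hsum j i c
    set SP := ∑ t ∈ Finset.range a, (x ^ i) ^ t * (-x ^ j) ^ (a - 1 - t)
    set SQ := ∑ t ∈ Finset.range c, (x ^ j) ^ t * (-x ^ i) ^ (c - 1 - t)
    have hpow : (x ^ i) ^ a = (x ^ j) ^ c * x := by
      rw [← pow_mul, ← pow_mul, ← pow_succ, hac]
    have key : (x ^ j) ^ c * β = SP - SQ * x' := by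
      rw [hpow] at hP
      have : (x ^ j) ^ c * (β * g) = (SP - SQ * x') * g := by
        linear_combination (norm := noncomm_ring) hP - hQ * x - (x ^ j) ^ c * hxy - SQ * hgx
      calc (x ^ j) ^ c * β = (x ^ j) ^ c * (β * g) * g := by
            rw [mul_assoc, mul_assoc, hg, mul_one]
        _ = _ := by rw [this, mul_assoc, hg, mul_one]
    refine (commute_of_isUnit_mul ((hx.pow j).pow c)
      ((Commute.self_pow x j).pow_right c) ?_).symm
    rw [key]
    exact hcP.sub_right (hcQ.mul_right hxx')
  have hU := commutator_pow hβ hgx hxy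
  have hcU : ∀ n, Commute β (∑ l ∈ Finset.range n, x ^ l * x' ^ (n - 1 - l)) := fun n =>
    Commute.sum_right _ _ _ fun l _ => (hβ.pow_right l).mul_right ((hcomm β hβ).pow_right _)
  have hUi : (∑ l ∈ Finset.range i, x ^ l * x' ^ (i - 1 - l)) * β = 1 := by
    rw [← (hcU i).eq, ← mul_one (β * _), ← hg, ← mul_assoc, ← hU i]
  have hUn : ∑ l ∈ Finset.range (i + j), x ^ l * x' ^ (i + j - 1 - l) = 0 := by
    have h0 : β * ∑ l ∈ Finset.range (i + j), x ^ l * x' ^ (i + j - 1 - l) = 0 := by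
      rw [← mul_one (β * _), ← hg, ← mul_assoc, ← hU (i + j), hz, sub_self, zero_mul]
    rw [← one_mul (∑ l ∈ Finset.range (i + j), _), ← hUi, mul_assoc, h0, mul_zero]
  obtain ⟨u, rfl⟩ := hx
  set v : R := ↑u⁻¹ with hvdef
  have hx'v : Commute x' v := (hxx'.units_inv_left).symm
  have hv : ∀ n, (u : R) ^ n * v ^ n = 1 := fun n => by
    rw [← (Commute.mul_pow (by simp [Commute, SemiconjBy, hvdef])), hvdef, Units.mul_inv, one_pow]
  have hwj : (x' * v) ^ j = -(u : R) ^ (i - j) := by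
    rw [hx'v.mul_pow, hx'j]
    have : (u : R) ^ i = (u : R) ^ (i - j) * (u : R) ^ j := by
      rw [← pow_add, Nat.sub_add_cancel hij.le]
    rw [this, neg_mul, mul_assoc, hv, mul_one]
  have hwn : (x' * v) ^ (i + j) = 1 := by
    rw [hx'v.mul_pow, pow_add x', hx'i, hx'j, neg_mul_neg, ← hpq, ← pow_add, hv]
  have hnj : Nat.Coprime (i + j) j := by simpa using hco
  have hsum := sum_pow_mul_of_coprime (by omega) hwn hnj
  simp only [pow_mul, hwj] at hsum
  rw [hsum]
  refine (u.isUnit.pow (i + j - 1)).mul_left_cancel ?_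
  rw [mul_zero, ← hUn, ← Finset.sum_range_reflect, Finset.mul_sum]
  refine Finset.sum_congr rfl fun l hl => ?_
  rw [Finset.mem_range] at hl
  have hl' : (u : R) ^ (i + j - 1) = (u : R) ^ l * (u : R) ^ (i + j - 1 - l) := by
    rw [← pow_add]; congr 1; omega
  rw [hx'v.mul_pow, (hx'v.pow_pow _ _).eq, hl', mul_assoc, ← mul_assoc _ (v ^ _), hv, one_mul]

/-- For arbitrary `i > j`, a power of `x ^ (i - j)` is an alternating sum of lower ones. -/
theorem pow_eq_alternating_sum {x y : R} {i j : ℕ} (hi : 1 ≤ i) (hj : 1 ≤ j) (hij : i > j)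
    {d : ℕ} (hd : d = Nat.gcd i j) (hy : y * y = 0) (hrel : x ^ i * y + y * x ^ j = 1) :
    x ^ (((i + j) / d - 1) * (i - j))
      = ∑ k ∈ Finset.Icc 1 ((i + j) / d - 1),
          (-1 : R) ^ (k + 1) * x ^ (((i + j) / d - 1 - k) * (i - j)) := by
  have hd0 : 0 < d := hd ▸ Nat.gcd_pos_of_pos_left j hi
  obtain ⟨a, b, hco, ha, hb⟩ := Nat.exists_coprime i j
  rw [← hd] at ha hb
  have hb1 : 1 ≤ b := Nat.pos_of_ne_zero (by rintro rfl; omega)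
  have hab : b < a := by rw [ha, hb] at hij; exact lt_of_mul_lt_mul_right hij hd0.le
  have hsum := sum_neg_pow_eq_zero (x := x ^ d) (y := y) hb1 hab hco hy
    (by rw [← pow_mul, ← pow_mul, mul_comm d, mul_comm d, ← ha, ← hb]; exact hrel)
  have hn : (i + j) / d = a + b := by rw [ha, hb, ← add_mul, Nat.mul_div_cancel _ hd0]
  have hm : i - j = d * (a - b) := by rw [ha, hb, ← Nat.sub_mul, mul_comm]
  rw [← pow_mul, ← hm] at hsum
  rw [hn]
  obtain ⟨n, hn'⟩ : ∃ n, a + b = n + 1 := ⟨a + b - 1, by omega⟩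
  rw [hn'] at hsum ⊢
  rw [← Finset.sum_range_reflect, Finset.sum_range_succ'] at hsum
  simp only [Nat.add_sub_cancel, Nat.sub_zero] at hsum ⊢
  rw [← Finset.Ico_add_one_right_eq_Icc, Finset.sum_Ico_eq_sum_range]
  simp only [Nat.add_sub_cancel]
  have hneg : ∀ l, (-x ^ (i - j)) ^ l = (-1) ^ l * x ^ (l * (i - j)) := fun l => by
    rw [neg_pow, ← pow_mul, mul_comm l]
  simp only [hneg] at hsum
  have hsq : ∀ l, (-1 : R) ^ l * (-1) ^ l = 1 := fun l => by
    rw [← (Commute.refl (-1 : R)).mul_pow, neg_one_mul, neg_neg, one_pow]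
  calc x ^ (n * (i - j)) = (-1) ^ n * ((-1) ^ n * x ^ (n * (i - j))) := by
        rw [← mul_assoc, hsq, one_mul]
    _ = (-1) ^ n * -∑ k ∈ Finset.range n,
          (-1) ^ (n - (k + 1)) * x ^ ((n - (k + 1)) * (i - j)) := by
        rw [eq_neg_of_add_eq_zero_right hsum]
    _ = _ := by
        rw [← Finset.sum_neg_distrib, Finset.mul_sum]
        refine Finset.sum_congr rfl fun k hk => ?_
        rw [Finset.mem_range] at hk
        have hs : (-1 : R) ^ n = (-1) ^ (k + 1) * (-1) ^ (n - (k + 1)) := by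
          rw [← pow_add]; congr 1; omega
        rw [hs, mul_neg, mul_assoc, ← mul_assoc ((-1) ^ (n - (k + 1))), hsq, one_mul,
          add_comm 1 k, pow_succ _ (k + 1), mul_neg_one, neg_mul]

end Powers

theorem stmt5 (A : Type*) [CommRing A] (i j : ℕ) (hi : 1 ≤ i) (hj : 1 ≤ j)
    (hij : i > j) (d : ℕ) (hd : d = Nat.gcd i j) :
    Xgen A i j ^ (((i + j) / d - 1) * (i - j))
      = ∑ k ∈ Finset.Icc 1 ((i + j) / d - 1),
          (-1 : MatRing A i j) ^ (k + 1) * Xgen A i j ^ (((i + j) / d - 1 - k) * (i - j)) := by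
  have hrel : Xgen A i j ^ i * Ygen A i j + Ygen A i j * Xgen A i j ^ j = 1 := by
    have := RingQuot.mkAlgHom_rel A (MatRel.rel1 (A := A) (i := i) (j := j))
    simp only [map_add, map_mul, map_pow, map_one] at this
    exact this
  have hy : Ygen A i j * Ygen A i j = 0 := by
    have := RingQuot.mkAlgHom_rel A (MatRel.rel2 (A := A) (i := i) (j := j))
    simp only [map_zero, pow_two, map_mul] at this
    exact this
  exact pow_eq_alternating_sum hi hj hij hd hy hrel
end

section
/- Suppose i ≥ j and let d = gcd(i,j). Then in R(A;i,j) one has x^{(i²−j²)/d} = (−1)^{(i+j)/d}·1. -/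
section TwistedRelation

open Polynomial

variable {R : Type*} [Ring R]

theorem commute_mul_of_twisted {p q y : R} (hpq : Commute p q) (h : p * y + y * q = 1)
    (h' : q * y + y * p = 1) : Commute (p * q) y := by
  calc p * q * y = p * (1 - y * p) := by rw [mul_assoc, eq_sub_of_add_eq h']
    _ = p - (1 - y * q) * p := by rw [← eq_sub_of_add_eq h]; noncomm_ring
    _ = y * (q * p) := by noncomm_ring
    _ = y * (p * q) := by rw [hpq.eq]

theorem mul_mul_self_of_twisted {p q y : R} (h : p * y + y * q = 1) (hy : y * y = 0) :
    y * p * y = y ∧ y * q * y = y := by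
  constructor
  · calc y * p * y = y * (p * y + y * q) - y * y * q := by noncomm_ring
      _ = y := by rw [h, hy]; simp
  · calc y * q * y = (p * y + y * q) * y - p * (y * y) := by noncomm_ring
      _ = y := by rw [h, hy]; simp

theorem commute_sub_of_twisted {p q y : R} (hpq : Commute p q) (h : p * y + y * q = 1)
    (hy : y * y = 0) : Commute (p - q) y := by
  obtain ⟨hp, hq⟩ := mul_mul_self_of_twisted h hy
  have hzero : y * p * q * y = 0 := by
    calc y * p * q * y = y * (p * q) * y := by noncomm_ring
      _ = y * q * (p * y + y * q) - y * q * y * q := by rw [hpq.eq]; noncomm_ring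
      _ = 0 := by rw [h, hq]; simp
  have hsum : y * p * p * y + y * q * q * y = 0 := by
    calc y * p * p * y + y * q * q * y
        = y * p * p * (y * q * y) + (y * p * y) * q * q * y := by rw [hp, hq]
      _ = y * p * (p * y + y * q) * q * y := by noncomm_ring
      _ = 0 := by rw [h, mul_one, hzero]
  have hsq : p * p * y - y * q * q = p - q := by
    calc p * p * y - y * q * q = p * (p * y + y * q) - (p * y + y * q) * q := by noncomm_ring
      _ = p - q := by rw [h]; simp
  have hl : (p - q) * y = -(y * q * q * y) := by
    rw [← hsq, sub_mul, mul_assoc (p * p), hy]; simp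
  have hr : y * (p - q) = y * p * p * y := by
    rw [← hsq, mul_sub, mul_assoc y q q, ← mul_assoc y y, hy]; noncomm_ring
  rw [commute_iff_eq, hl, hr]
  exact (eq_neg_of_add_eq_zero_left hsum).symm

theorem twisted_swap {p q y : R} (h : p * y + y * q = 1) (hc : Commute (p - q) y) :
    q * y + y * p = 1 := by
  calc q * y + y * p = p * y + y * q - ((p - q) * y - y * (p - q)) := by noncomm_ring
    _ = 1 := by rw [h, hc.eq]; simp

/-- Powers of `u = f * p + g` and of its conjugate `-f * q + g` expand with the same
coefficients; these stay in any subring containing `p - q`, `p * q`, `f` and `g`. -/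
theorem exists_conjugate_pow {K : Type*} [CommRing K] (S : Subring K) {p q : K}
    (ha : p - q ∈ S) (hc : p * q ∈ S) {f g : K} (hf : f ∈ S) (hg : g ∈ S) (n : ℕ) :
    ∃ F ∈ S, ∃ G ∈ S, (f * p + g) ^ n = F * p + G ∧ (-f * q + g) ^ n = -F * q + G := by
  induction n with
  | zero => exact ⟨0, S.zero_mem, 1, S.one_mem, by simp, by simp⟩
  | succ n ih =>
    obtain ⟨F, hF, G, hG, h₁, h₂⟩ := ih
    refine ⟨F * f * (p - q) + F * g + G * f,
      S.add_mem (S.add_mem (S.mul_mem (S.mul_mem hF hf) ha) (S.mul_mem hF hg)) (S.mul_mem hG hf),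
      F * f * (p * q) + G * g, S.add_mem (S.mul_mem (S.mul_mem hF hf) hc) (S.mul_mem hG hg),
      ?_, ?_⟩
    · rw [pow_succ, h₁]; ring
    · rw [pow_succ, h₂]; ring

theorem coeffs_eq_zero_of_twisted {p q y F G : R} (h : p * y + y * q = 1) (hy : y * y = 0)
    (hF : Commute F y) (hG : Commute G y) (h0 : F * p + G = 0) : F = 0 ∧ G = 0 := by
  have hFy : F * y = 0 := by
    calc F * y = F * (y * p * y) := by rw [(mul_mul_self_of_twisted h hy).1]
      _ = y * (F * p + G) * y - y * (G * y) := by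
        rw [show F * (y * p * y) = (F * y) * p * y by noncomm_ring, hF.eq]; noncomm_ring
      _ = 0 := by rw [h0, hG.eq, ← mul_assoc, hy]; simp
  have hGy : G * y = 0 := by
    rw [hG.eq, eq_neg_of_add_eq_zero_right h0, mul_neg, ← mul_assoc, ← hF.eq, hFy]; simp
  have hF0 : F = 0 := by
    calc F = F * (p * y + y * q) := by rw [h, mul_one]
      _ = (F * p + G) * y + F * y * q - G * y := by noncomm_ring
      _ = 0 := by rw [h0, hFy, hGy]; simp
  refine ⟨hF0, ?_⟩
  simpa [hF0] using h0

theorem neg_pow_eq_of_twisted {x y : R} {i j m n : ℕ} (h : x ^ i * y + y * x ^ j = 1)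
    (hy : y * y = 0) (hmn : i * m = j * n) : (-x ^ j) ^ m = (-x ^ i) ^ n := by
  have hpq : Commute (x ^ i) (x ^ j) := Commute.pow_pow_self x i j
  have hsub := commute_sub_of_twisted hpq h hy
  have hmul := commute_mul_of_twisted hpq h (twisted_swap h hsub)
  let φ : ℤ[X] →+* R := (aeval x : ℤ[X] →ₐ[ℤ] R).toRingHom
  have hφ (k : ℕ) : φ (X ^ k) = x ^ k := by simp [φ]
  let S : Subring ℤ[X] := (Subring.centralizer {y}).comap φ
  have mem_S {f : ℤ[X]} : f ∈ S ↔ Commute (φ f) y := by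
    simp only [S, Subring.mem_comap, Subring.mem_centralizer_iff, Set.mem_singleton_iff,
      forall_eq]
    exact ⟨fun h => h.symm, fun h => h.symm⟩
  have ha : (X ^ i - X ^ j : ℤ[X]) ∈ S := by rw [mem_S, map_sub, hφ, hφ]; exact hsub
  have hc : (X ^ i * X ^ j : ℤ[X]) ∈ S := by rw [mem_S, map_mul, hφ, hφ]; exact hmul
  obtain ⟨F₁, hF₁, G₁, hG₁, e₁, e₁'⟩ :=
    exists_conjugate_pow S ha hc S.one_mem S.zero_mem m
  obtain ⟨F₂, hF₂, G₂, hG₂, e₂, e₂'⟩ :=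
    exists_conjugate_pow S ha hc S.one_mem (S.neg_mem ha) n
  have e : (F₁ - F₂) * X ^ i + (G₁ - G₂) = 0 := by
    have : (X ^ i : ℤ[X]) ^ m = (X ^ j) ^ n := by rw [← pow_mul, ← pow_mul, hmn]
    ring_nf at e₁ e₂ this ⊢
    linear_combination this + e₂ - e₁
  obtain ⟨hF, hG⟩ := coeffs_eq_zero_of_twisted h hy (mem_S.1 (S.sub_mem hF₁ hF₂))
    (mem_S.1 (S.sub_mem hG₁ hG₂)) (by rw [← hφ, ← map_mul, ← map_add, e, map_zero])
  rw [map_sub, sub_eq_zero] at hF hG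
  have e₁'' := congrArg φ e₁'
  have e₂'' := congrArg φ e₂'
  rw [show -1 * X ^ j + 0 = -(X ^ j : ℤ[X]) by ring] at e₁''
  rw [show -1 * X ^ j + -(X ^ i - X ^ j) = -(X ^ i : ℤ[X]) by ring] at e₂''
  simp only [map_pow, map_neg, map_add, map_mul, hF, hG] at e₁'' e₂''
  rw [← hφ i, ← hφ j, map_pow, map_pow, e₁'', e₂'']

theorem exists_mul_eq_one_of_twisted {x y : R} {i j : ℕ} (hj : 1 ≤ j) (hij : j < i)
    (h : x ^ i * y + y * x ^ j = 1) (hy : y * y = 0) : ∃ r, x * r = 1 := by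
  have hpq : Commute (x ^ i) (x ^ j) := Commute.pow_pow_self x i j
  have hsub := commute_sub_of_twisted hpq h hy
  have hmul : Commute (x ^ (i + j)) y := by
    rw [pow_add]; exact commute_mul_of_twisted hpq h (twisted_swap h hsub)
  obtain ⟨-, hyqy⟩ := mul_mul_self_of_twisted h hy
  set N := i + j with hN
  set a := x ^ i - x ^ j with ha
  set c := x ^ N with hc
  obtain ⟨v, w, hvw⟩ : ∃ v w, x ^ j = a * v + c * w := by
    obtain ⟨v, hv⟩ := sub_dvd_pow_sub_pow (X ^ (i - j) : ℤ[X]) 1 N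
    have hX : (X ^ j : ℤ[X]) = (X ^ i - X ^ j) * (-v) + X ^ N * X ^ (j + (i - j) * N - N) := by
      have hle : N ≤ j + (i - j) * N :=
        le_add_left (Nat.le_mul_of_pos_left N (Nat.sub_pos_of_lt hij))
      rw [← pow_add, Nat.add_sub_cancel' hle]
      have hi : (X ^ i : ℤ[X]) = X ^ j * X ^ (i - j) := by
        rw [← pow_add, Nat.add_sub_cancel' hij.le]
      rw [hi, pow_add, pow_mul]
      linear_combination -X ^ j * hv
    exact ⟨aeval x (-v), aeval x (X ^ (j + (i - j) * N - N) : ℤ[X]), by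
      simpa [ha, hc] using congrArg (aeval x) hX⟩
  have haN : ∃ b, a ^ N = c * b := by
    have hX : (X ^ i - X ^ j : ℤ[X]) ^ N = X ^ N * (X ^ (j - 1) * (X ^ (i - j) - 1)) ^ N := by
      rw [← mul_pow, ← mul_assoc, ← pow_succ', Nat.sub_add_cancel hj, mul_sub, ← pow_add,
        Nat.add_sub_cancel' hij.le, mul_one]
    exact ⟨_, by simpa [ha, hc] using congrArg (aeval x) hX⟩
  have hstep : y = a * y * (v * y) + c * (y * w * y) := by
    calc y = y * x ^ j * y := hyqy.symm
      _ = (y * a) * v * y + (y * c) * w * y := by rw [hvw]; noncomm_ring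
      _ = _ := by rw [← hsub.eq, ← hmul.eq]; noncomm_ring
  have hac : Commute a c :=
    (Commute.pow_pow_self x i N).sub_left (Commute.pow_pow_self x j N)
  have hiter (k : ℕ) : ∃ n, y = a ^ k * y * (v * y) ^ k + c * n := by
    induction k with
    | zero => exact ⟨0, by simp⟩
    | succ k ih =>
      obtain ⟨n, hn⟩ := ih
      refine ⟨a * n * (v * y) + y * w * y, ?_⟩
      calc y = a * y * (v * y) + c * (y * w * y) := hstep
        _ = a * (a ^ k * y * (v * y) ^ k + c * n) * (v * y) + c * (y * w * y) := by rw [← hn]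
        _ = a * a ^ k * y * ((v * y) ^ k * (v * y)) + a * c * n * (v * y) + c * (y * w * y) := by
          noncomm_ring
        _ = _ := by rw [← pow_succ, ← pow_succ', hac.eq]; noncomm_ring
  obtain ⟨b, hb⟩ := haN
  obtain ⟨n, hn⟩ := hiter N
  obtain ⟨z, hz⟩ : ∃ z, y = c * z :=
    ⟨b * y * (v * y) ^ N + n, by rw [mul_add, ← mul_assoc, ← mul_assoc, ← hb, ← hn]⟩
  have hcr : c * (x ^ i * z + z * x ^ j) = 1 := by
    calc c * (x ^ i * z + z * x ^ j) = c * x ^ i * z + c * z * x ^ j := by noncomm_ring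
      _ = x ^ i * (c * z) + c * z * x ^ j := by
        rw [(Commute.pow_pow_self x N i).eq, mul_assoc (x ^ i)]
      _ = 1 := by rw [← hz, h]
  refine ⟨x ^ (N - 1) * (x ^ i * z + z * x ^ j), ?_⟩
  rwa [← mul_assoc, ← pow_succ', Nat.sub_add_cancel (by omega)]

theorem mul_pow_right_cancel {x r u v : R} (hr : x * r = 1) (k : ℕ)
    (h : u * x ^ k = v * x ^ k) : u = v := by
  rw [← mul_one u, ← mul_one v, ← pow_mul_pow_eq_one k hr, ← mul_assoc, h, mul_assoc]

theorem pow_eq_neg_one_pow_of_twisted {x y : R} {i j m n : ℕ} (hj : 1 ≤ j) (hij : j < i)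
    (hnm : m ≤ n) (h : x ^ i * y + y * x ^ j = 1) (hy : y * y = 0) (hmn : i * m = j * n) :
    x ^ (i * n - j * m) = (-1) ^ (n + m) := by
  obtain ⟨r, hr⟩ := exists_mul_eq_one_of_twisted hj hij h hy
  have hp := neg_pow_eq_of_twisted h hy hmn
  rw [neg_pow, neg_pow (x ^ i), ← pow_mul, ← pow_mul] at hp
  refine mul_pow_right_cancel hr (j * m) ?_
  rw [← pow_add, Nat.sub_add_cancel (Nat.mul_le_mul hij.le hnm), pow_add, mul_assoc, hp,
    ← mul_assoc, ← pow_add, Even.neg_one_pow (Even.add_self n), one_mul]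

end TwistedRelation

theorem stmt6 (A : Type*) [CommRing A] (i j : ℕ) (hi : 1 ≤ i) (hj : 1 ≤ j)
    (hij : i ≥ j) (d : ℕ) (hd : d = Nat.gcd i j) :
    Xgen A i j ^ ((i ^ 2 - j ^ 2) / d)
      = (-1 : MatRing A i j) ^ ((i + j) / d) * 1 := by
  rw [mul_one]
  have hd0 : 0 < d := hd ▸ Nat.gcd_pos_of_pos_left j hi
  obtain ⟨n, hn⟩ : d ∣ i := hd ▸ Nat.gcd_dvd_left i j
  obtain ⟨m, hm⟩ : d ∣ j := hd ▸ Nat.gcd_dvd_right i j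
  have hmn : m ≤ n := Nat.le_of_mul_le_mul_left (by rw [← hn, ← hm]; exact hij) hd0
  have hsum : (i + j) / d = n + m := by
    rw [hn, hm, ← mul_add, Nat.mul_div_cancel_left _ hd0]
  have hexp : (i ^ 2 - j ^ 2) / d = i * n - j * m := by
    have : i ^ 2 - j ^ 2 = d * (i * n - j * m) := by
      rw [Nat.mul_sub, mul_left_comm, mul_left_comm d, ← hn, ← hm, sq, sq]
    rw [this, Nat.mul_div_cancel_left _ hd0]
  rw [hsum, hexp]
  rcases hij.eq_or_lt with heq | hlt
  · have hnm : n = m := Nat.eq_of_mul_eq_mul_left hd0 (by rw [← hn, ← hm]; exact heq.symm)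
    rw [heq, hnm, Nat.sub_self, pow_zero]
    exact (Even.neg_one_pow (α := MatRing A i i) (Even.add_self m)).symm
  · refine pow_eq_neg_one_pow_of_twisted (y := Ygen A i j) hj hlt hmn ?_ ?_ ?_
    · simpa [Xgen, Ygen] using RingQuot.mkAlgHom_rel A (MatRel.rel1 (A := A) (i := i) (j := j))
    · simpa [Ygen, sq] using RingQuot.mkAlgHom_rel A (MatRel.rel2 (A := A) (i := i) (j := j))
    · rw [hn, hm]; ring
end

section
/- Let d = gcd(i,j). Then there exist polynomials p(X), q(X) in one variable over A such that in R(A;i,j) one has y·x^d = p(x) + q(x)·y. -/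
open Polynomial in
/-- `z` lies in the left `A[x]`-submodule generated by `1` and `y`. -/
def InSpan (A : Type*) {R : Type*} [CommRing A] [Ring R] [Algebra A R] (x y z : R) : Prop :=
  ∃ p q : A[X], z = aeval x p + aeval x q * y

section Span

open Polynomial

variable {A R : Type*} [CommRing A] [Ring R] [Algebra A R] {x y : R}

theorem InSpan.sub {z w : R} (hz : InSpan A x y z) (hw : InSpan A x y w) :
    InSpan A x y (z - w) := by
  obtain ⟨p, q, rfl⟩ := hz
  obtain ⟨r, s, rfl⟩ := hw
  refine ⟨p - r, q - s, ?_⟩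
  simp only [map_sub]
  noncomm_ring

theorem InSpan.aeval_mul {z : R} (hz : InSpan A x y z) (r : A[X]) :
    InSpan A x y (aeval x r * z) := by
  obtain ⟨p, q, rfl⟩ := hz
  exact ⟨r * p, r * q, by simp only [map_mul, mul_add, mul_assoc]⟩

theorem InSpan.pow_mul {z : R} (hz : InSpan A x y z) (n : ℕ) : InSpan A x y (x ^ n * z) := by
  simpa using hz.aeval_mul (X ^ n)

theorem inSpan_pow (n : ℕ) : InSpan A x y (x ^ n) := ⟨X ^ n, 0, by simp⟩

theorem inSpan_self : InSpan A x y y := ⟨0, 1, by simp⟩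

theorem InSpan.mul_pow_add {i j n : ℕ} (h : x ^ i * y + y * x ^ j = 1)
    (hn : InSpan A x y (y * x ^ n)) : InSpan A x y (y * x ^ (n + j)) := by
  have e : y * x ^ (n + j) = x ^ n - x ^ i * (y * x ^ n) := by
    rw [add_comm n j, pow_add, ← mul_assoc, ← mul_assoc, eq_sub_of_add_eq' h, sub_mul, one_mul]
  rw [e]
  exact (inSpan_pow n).sub (hn.pow_mul i)

theorem InSpan.mul_pow_of_add {i j n : ℕ} (h : x ^ i * y + y * x ^ j = 1) {r : A[X]}
    (hr : aeval x r * x = 1) (hn : InSpan A x y (y * x ^ (n + j))) :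
    InSpan A x y (y * x ^ n) := by
  have hc : Commute (aeval x r) x := by
    simpa using (Commute.all r X).map (aeval (R := A) x)
  have hri : aeval x (r ^ i) * x ^ i = 1 := by
    rw [map_pow, ← hc.mul_pow, hr, one_pow]
  have e : y * x ^ n = aeval x (r ^ i) * (x ^ n - y * x ^ (n + j)) := by
    have e' : x ^ n - y * x ^ (n + j) = x ^ i * (y * x ^ n) := by
      rw [add_comm n j, pow_add, ← mul_assoc, eq_sub_of_add_eq' h]
      noncomm_ring
    rw [e', ← mul_assoc, hri, one_mul]
  rw [e]
  exact ((inSpan_pow n).sub hn).aeval_mul _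

theorem InSpan.mul_pow_gcd {i j : ℕ} (hi : 1 ≤ i) (hij : i < j)
    (h : x ^ i * y + y * x ^ j = 1) (h' : x ^ j * y + y * x ^ i = 1) {r : A[X]}
    (hr : aeval x r * x = 1) : InSpan A x y (y * x ^ Nat.gcd i j) := by
  have up : ∀ m, InSpan A x y (y * x ^ (i * m)) := by
    intro m
    induction m with
    | zero => simpa using inSpan_self
    | succ m ih => exact ih.mul_pow_add h'
  have down : ∀ m n, InSpan A x y (y * x ^ (n + j * m)) → InSpan A x y (y * x ^ n) := by
    intro m n
    induction m with
    | zero => exact id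
    | succ m ih => exact fun hm => ih (InSpan.mul_pow_of_add h hr
      (by rwa [add_assoc, ← Nat.mul_succ]))
  obtain ⟨m, -, hm⟩ := Nat.exists_mul_mod_eq_gcd
    ((Nat.gcd_le_left j hi).trans_lt hij)
  refine down (i * m / j) _ ?_
  rw [← hm, Nat.mod_add_div]
  exact up m

end Span

section Relations

variable {R : Type*} [Ring R] {a b x y : R}

/-- The relation `a * y + y * b = 1` with `y ^ 2 = 0` is symmetric in commuting `a` and `b`. -/
theorem mul_add_mul_eq_one_swap (hab : Commute a b) (h : a * y + y * b = 1) (hy : y * y = 0) :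
    b * y + y * a = 1 := by
  have hyay : y * a * y = y := by
    have := congrArg (y * ·) h
    simpa [mul_add, ← mul_assoc, hy] using this
  have hyby : y * b * y = y := by
    have := congrArg (· * y) h
    simpa [add_mul, mul_assoc, hy] using this
  have hyb : y * b = 1 - a * y := eq_sub_of_add_eq' h
  have hyaby : y * a * b * y = 0 := by
    calc y * a * b * y = y * b * a * y := by rw [mul_assoc y, hab.eq, ← mul_assoc]
      _ = a * y - a * (y * a * y) := by rw [hyb]; noncomm_ring
      _ = 0 := by rw [hyay, sub_self]
  have hsum : y * a * a * y + y * b * b * y = 0 := by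
    calc y * a * a * y + y * b * b * y
        = y * a * a * (y * b * y) + (y * a * y) * b * b * y := by rw [hyay, hyby]
      _ = y * a * (a * y + y * b) * b * y := by noncomm_ring
      _ = 0 := by rw [h, mul_one, hyaby]
  calc b * y + y * a = (a * y + y * b) * (b * y) + y * a * (a * y + y * b) := by
        rw [h, one_mul, mul_one]
    _ = a * (y * b * y) + (y * a * y) * b + (y * a * a * y + y * b * b * y) := by noncomm_ring
    _ = 1 := by rw [hyay, hyby, hsum, add_zero, h]

theorem mul_pow_eq_geom_sum (h : b * y + y * a = 1) (n : ℕ) :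
    y * a ^ n = ∑ l ∈ Finset.range n, (-b) ^ l * a ^ (n - 1 - l) + (-b) ^ n * y := by
  induction n with
  | zero => simp
  | succ n ih =>
    have hs : ∑ l ∈ Finset.range n, (-b) ^ l * a ^ (n - l) =
        (∑ l ∈ Finset.range n, (-b) ^ l * a ^ (n - 1 - l)) * a := by
      rw [Finset.sum_mul]
      refine Finset.sum_congr rfl fun l hl => ?_
      have hl' : n - l = n - 1 - l + 1 := by
        have := Finset.mem_range.1 hl
        omega
      rw [hl', pow_succ, mul_assoc]
    rw [pow_succ a, ← mul_assoc, ih, add_mul, mul_assoc _ y, eq_sub_of_add_eq' h,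
      Finset.sum_range_succ, Nat.add_sub_cancel, hs, Nat.sub_self, pow_succ (-b)]
    noncomm_ring

/-- If `i < j`, the relations make `x` left invertible. -/
theorem exists_mul_eq_one {i j : ℕ} (hi : 1 ≤ i) (hij : i < j)
    (h : x ^ i * y + y * x ^ j = 1) (h' : x ^ j * y + y * x ^ i = 1) : ∃ z, z * x = 1 := by
  obtain ⟨i, rfl⟩ := Nat.exists_eq_add_of_le' hi
  obtain ⟨m, rfl⟩ := Nat.exists_eq_add_of_lt hij
  refine ⟨x ^ m - (x ^ (m + 1) * y * x ^ (m + 1) - y) * x ^ i, ?_⟩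
  have hz : (x ^ m - (x ^ (m + 1) * y * x ^ (m + 1) - y) * x ^ i) * x =
      x ^ (m + 1) - x ^ (m + 1) * (y * x ^ (i + 1 + m + 1)) + y * x ^ (i + 1) := by
    have e : x ^ (i + 1 + m + 1) = x ^ (m + 1) * x ^ i * x := by
      rw [mul_assoc, ← pow_succ, ← pow_add]
      congr 1
      omega
    rw [e, pow_succ x i, pow_succ x m]
    noncomm_ring
  have e : x ^ (i + 1 + m + 1) = x ^ (m + 1) * x ^ (i + 1) := by
    rw [← pow_add]
    congr 1
    omega
  rw [hz, eq_sub_of_add_eq' h, eq_sub_of_add_eq' h', e]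
  noncomm_ring

end Relations

section Inverse

open Polynomial

variable {A R : Type*} [CommRing A] [Ring R] [Algebra A R] {x y : R}

theorem X_pow_dvd_geom_sum_sub {i j : ℕ} (hij : i + 1 < j) :
    (X : A[X]) ^ ((i + 1) * i + 1) ∣
      ∑ l ∈ Finset.range j, (-X ^ j) ^ l * (X ^ (i + 1)) ^ (j - 1 - l) -
        ∑ l ∈ Finset.range (i + 1), (-X ^ (i + 1)) ^ l * (X ^ j) ^ (i + 1 - 1 - l) +
        (-X ^ (i + 1)) ^ i := by
  have key : ∀ u v l k : ℕ, (i + 1) * i + 1 ≤ u * l + v * k →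
      (X : A[X]) ^ ((i + 1) * i + 1) ∣ (-X ^ u) ^ l * (X ^ v) ^ k := by
    intro u v l k hle
    rw [neg_pow, ← pow_mul, ← pow_mul, mul_assoc, ← pow_add]
    exact (pow_dvd_pow _ hle).mul_left _
  rw [Finset.sum_range_succ _ i]
  simp only [Nat.add_sub_cancel, Nat.sub_self, pow_zero, mul_one, sub_add_eq_sub_sub,
    sub_add_cancel]
  refine dvd_sub (Finset.dvd_sum fun l hl => key _ _ _ _ ?_)
    (Finset.dvd_sum fun l hl => key _ _ _ _ ?_)
  · have hl := Finset.mem_range.1 hl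
    obtain ⟨k, rfl⟩ := Nat.exists_eq_add_of_lt hl
    have : l + k + 1 - 1 - l = k := by omega
    rw [this]
    have h1 : (i + 1) * l ≤ (l + k + 1) * l := Nat.mul_le_mul_right _ hij.le
    have h2 : (i + 1) * (i + 1) ≤ (i + 1) * (l + k) := Nat.mul_le_mul_left _ (by omega)
    linarith
  · have hl := Finset.mem_range.1 hl
    obtain ⟨k, rfl⟩ := Nat.exists_eq_add_of_lt hl
    have : l + k + 1 - l = k + 1 := by omega
    rw [this]
    have : (l + k + 1 + 1 + 1) * (k + 1) ≤ j * (k + 1) := Nat.mul_le_mul_right _ hij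
    nlinarith

/-- If `i < j`, the relations give a left inverse of `x` that is a polynomial in `x`. -/
theorem exists_aeval_mul_eq_one {i j : ℕ} (hi : 1 ≤ i) (hij : i < j)
    (h : x ^ i * y + y * x ^ j = 1) (h' : x ^ j * y + y * x ^ i = 1) (hy : y * y = 0) :
    ∃ r : A[X], aeval x r * x = 1 := by
  obtain ⟨z, hz⟩ := exists_mul_eq_one hi hij h h'
  obtain ⟨i, rfl⟩ := Nat.exists_eq_add_of_le' hi
  obtain ⟨r, hr⟩ := X_pow_dvd_geom_sum_sub (A := A) hij
  set F : A[X] := ∑ l ∈ Finset.range j, (-X ^ j) ^ l * (X ^ (i + 1)) ^ (j - 1 - l) -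
    ∑ l ∈ Finset.range (i + 1), (-X ^ (i + 1)) ^ l * (X ^ j) ^ (i + 1 - 1 - l) with hF
  have hFG : aeval x F = (-x ^ (i + 1)) ^ (i + 1) * y - (-x ^ j) ^ j * y := by
    have h1 := mul_pow_eq_geom_sum h' j
    have h2 := mul_pow_eq_geom_sum h (i + 1)
    rw [← pow_mul, mul_comm, pow_mul, h2] at h1
    simp only [hF, map_sub, map_sum, map_mul, map_pow, map_neg, aeval_X]
    rw [sub_eq_sub_iff_add_eq_add, ← h1, add_comm]
  have hFy : aeval x F * y = 0 := by
    rw [hFG, sub_mul, mul_assoc, mul_assoc, hy, mul_zero, mul_zero, sub_zero]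
  have hFx : Commute (aeval x F) x := by
    simpa using (Commute.all F X).map (aeval (R := A) x)
  have hF0 : aeval x F = 0 := by
    rw [← mul_one (aeval x F), ← h, mul_add, ← mul_assoc, ← mul_assoc, (hFx.pow_right _).eq,
      mul_assoc, hFy, mul_zero, zero_mul, add_zero]
  have hreg : IsLeftRegular (x ^ ((i + 1) * i)) :=
    (isLeftRegular_of_mul_eq_one hz).pow _
  have hxr : x * aeval x r = (-1) ^ i := by
    apply hreg
    have := congrArg (aeval x) hr
    rw [map_add, hF0, zero_add, neg_pow, ← pow_mul] at this
    simp only [map_mul, map_pow, map_neg, map_one, aeval_X] at this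
    rw [pow_succ, mul_assoc] at this
    simp only
    rw [← this, ((Commute.neg_one_left x).pow_left i |>.pow_right _).eq]
  refine ⟨(-1) ^ i * r, ?_⟩
  have hrx : Commute (aeval x r) x := by
    simpa using (Commute.all r X).map (aeval (R := A) x)
  rw [map_mul, mul_assoc, hrx.eq, hxr]
  simp [← pow_add, ← two_mul]

theorem inSpan_mul_pow_gcd {i j : ℕ} (hi : 1 ≤ i) (hj : 1 ≤ j)
    (h : x ^ i * y + y * x ^ j = 1) (hy : y * y = 0) : InSpan A x y (y * x ^ Nat.gcd i j) := by
  have h' := mul_add_mul_eq_one_swap (Commute.pow_pow_self x i j) h hy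
  rcases lt_trichotomy i j with hij | rfl | hij
  · obtain ⟨r, hr⟩ := exists_aeval_mul_eq_one (A := A) hi hij h h' hy
    exact InSpan.mul_pow_gcd hi hij h h' hr
  · have h0 : InSpan A x y (y * x ^ 0) := by simpa using inSpan_self
    simpa using h0.mul_pow_add h
  · obtain ⟨r, hr⟩ := exists_aeval_mul_eq_one (A := A) hj hij h' h hy
    rw [Nat.gcd_comm]
    exact InSpan.mul_pow_gcd hj hij h' h hr

end Inverse

theorem stmt8 (A : Type*) [CommRing A] (i j : ℕ) (hi : 1 ≤ i) (hj : 1 ≤ j) :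
    ∃ p q : Polynomial A,
      Ygen A i j * Xgen A i j ^ (Nat.gcd i j)
        = Polynomial.aeval (Xgen A i j) p +
          Polynomial.aeval (Xgen A i j) q * Ygen A i j := by
  have h : Xgen A i j ^ i * Ygen A i j + Ygen A i j * Xgen A i j ^ j = 1 := by
    simpa [Xgen, Ygen] using RingQuot.mkAlgHom_rel A (MatRel.rel1 (A := A) (i := i) (j := j))
  have hy : Ygen A i j * Ygen A i j = 0 := by
    simpa [Ygen, sq] using RingQuot.mkAlgHom_rel A (MatRel.rel2 (A := A) (i := i) (j := j))
  exact inSpan_mul_pow_gcd hi hj h hy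
end

section
/- If i > j and gcd(i,j) = 1, then R(A;i,j) is generated as an A-module by the set {x^m : 0 ≤ m < (i+j−1)(i−j)} ∪ {x^m·y : 0 ≤ m < (i+j−1)(i−j)}; in particular R(A;i,j) is a finitely generated A-module, with a generating set of cardinality at most 2(i+j−1)(i−j). -/
section Relations

variable {R : Type*} [Ring R]

/-- If `a` and `b` commute, the relations `b * y + y * a = 1` and `y * y = 0` are symmetric in
`a` and `b`. -/
theorem mul_add_mul_swap_eq_one {a b y : R} (hab : a * b = b * a) (h : b * y + y * a = 1)
    (hy : y * y = 0) : a * y + y * b = 1 := by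
  have hya : y * a * y = y := by
    have := congrArg (· * y) h
    simpa [add_mul, mul_assoc, hy] using this
  have hyb : y * b * y = y := by
    have := congrArg (y * ·) h
    simpa [mul_add, ← mul_assoc, hy] using this
  obtain ⟨D, hD⟩ : ∃ D, D = a * y + y * b - 1 := ⟨_, rfl⟩
  have hyD : y * D = 0 := by
    rw [hD, mul_sub, mul_add, ← mul_assoc, ← mul_assoc, hya, hy]; simp
  have hbD : b * D = a * b * y - y * a * b := by
    have : b * D = b * a * y + (b * y + y * a) * b - y * a * b - b := by rw [hD]; noncomm_ring
    rw [this, h, hab]; noncomm_ring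
  have hDa : D * a = y * a * b - a * b * y := by
    have : D * a = a * (b * y + y * a) + y * (b * a) - a * b * y - a := by rw [hD]; noncomm_ring
    rw [this, h, ← hab]; noncomm_ring
  have hD' : D = y * a * D := by
    calc D = (b * y + y * a) * D := by rw [h, one_mul]
      _ = b * (y * D) + y * a * D := by noncomm_ring
      _ = y * a * D := by rw [hyD]; simp
  have h1 : y * b * D = 0 := by
    have : b * D = -(D * a) := by rw [hbD, hDa]; abel
    rw [mul_assoc, this, mul_neg, ← mul_assoc, hyD]; simp
  have h2 : y * b * D = D := by
    calc y * b * D = y * b * y * (a * D) := by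
          nth_rw 1 [hD']; simp only [mul_assoc]
      _ = D := by rw [hyb, ← mul_assoc, ← hD']
  rw [h1] at h2
  exact sub_eq_zero.mp (hD.symm.trans h2.symm)

theorem commute_sub_of_mul_add_mul_eq_one {a b y : R} (hab : a * b = b * a)
    (h : b * y + y * a = 1) (hy : y * y = 0) : Commute (a - b) y := by
  have h' := mul_add_mul_swap_eq_one hab h hy
  have : a * y + y * b = b * y + y * a := h'.trans h.symm
  change (a - b) * y = y * (a - b)
  rw [sub_mul, mul_sub, sub_eq_sub_iff_add_eq_add, this, add_comm]

theorem commute_mul_of_mul_add_mul_eq_one {a b y : R} (hab : a * b = b * a)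
    (h : b * y + y * a = 1) (hy : y * y = 0) : Commute (a * b) y := by
  have h' := mul_add_mul_swap_eq_one hab h hy
  change a * b * y = y * (a * b)
  have e1 : a * (b * y + y * a) = (a * y + y * b) * a := by rw [h, h']; simp
  have e2 : a * (b * y) + a * y * a = a * y * a + y * (b * a) := by
    simpa [mul_add, add_mul, mul_assoc] using e1
  rw [add_comm, hab.symm] at e2
  rw [mul_assoc, add_left_cancel e2]

theorem mul_pow_succ_eq_geom_sum {a v y : R} (hav : Commute a v) (h : y * a = 1 + a * v * y)
    (k : ℕ) : y * a ^ (k + 1) =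
      a ^ k * ∑ l ∈ Finset.range (k + 1), v ^ l + a ^ (k + 1) * v ^ (k + 1) * y := by
  induction k with
  | zero => simpa using h
  | succ k ih =>
    have hs : Commute (∑ l ∈ Finset.range (k + 1), v ^ l) a :=
      (Commute.sum_right _ _ _ fun l _ => hav.pow_right l).symm
    have hv : a ^ (k + 1) * v ^ (k + 1) * (a * v) = a ^ (k + 2) * v ^ (k + 2) := by
      rw [pow_succ a (k + 1), pow_succ v (k + 1)]
      simp only [mul_assoc]
      rw [← mul_assoc (v ^ (k + 1)) a v, ← (hav.pow_right (k + 1)).eq]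
      simp only [mul_assoc]
    calc y * a ^ (k + 1 + 1) = y * a ^ (k + 1) * a := by rw [pow_succ a (k + 1), ← mul_assoc]
      _ = _ := by
        rw [ih, add_mul, mul_assoc _ y a, h, mul_add, mul_one, ← mul_assoc _ (a * v) y, hv,
          mul_assoc, hs.eq, ← mul_assoc, ← pow_succ, Finset.sum_range_succ _ (k + 1), mul_add,
          add_assoc]

theorem pow_mul_geom_sum_eq_zero {a v y : R} (hav : Commute a v) (h : y * a = 1 + a * v * y)
    (hy : y * y = 0) (k : ℕ) (hc : Commute (a ^ (k + 1)) y) :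
    a ^ k * ∑ l ∈ Finset.range (k + 1), v ^ l = 0 := by
  have hk := mul_pow_succ_eq_geom_sum hav h k
  obtain ⟨s, hs⟩ : ∃ s, s = ∑ l ∈ Finset.range (k + 1), v ^ l := ⟨_, rfl⟩
  have hg : (1 - v) * s = 1 - v ^ (k + 1) := by rw [hs]; exact mul_neg_geom_sum v (k + 1)
  have hva : Commute (1 - v) (a ^ k) := ((Commute.one_right _).sub_right (hav.pow_left k)).symm
  rw [← hs] at hk ⊢
  have h1 : a ^ k * s = a * (1 - v) * (a ^ k * s * y) := by
    calc a ^ k * s = a ^ (k + 1) * y - a ^ (k + 1) * v ^ (k + 1) * y := by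
          rw [hc.eq, hk]; abel
      _ = a ^ (k + 1) * (1 - v ^ (k + 1)) * y := by noncomm_ring
      _ = a * ((a ^ k * (1 - v)) * s) * y := by
          rw [← hg, pow_succ']; simp only [mul_assoc]
      _ = a * (1 - v) * (a ^ k * s * y) := by
          rw [← hva.eq]; simp only [mul_assoc]
  have h2 : a ^ k * s * y = 0 := by
    rw [h1]; simp only [mul_assoc, hy, mul_zero]
  rw [h1, h2, mul_zero]

/-- The element `x` has no nilpotent part: an element `e` commuting with `y` and killed by a power of `x`
vanishes. -/
theorem eq_zero_of_pow_mul_eq_zero {x y e : R} {j d M : ℕ} (hj : 1 ≤ j) (hd : 1 ≤ d)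
    (h : x ^ (j + d) * y + y * x ^ j = 1) (hy : y * y = 0)
    (hey : Commute e y) (he : x ^ M * e = 0) : e = 0 := by
  have hpy : Commute (x ^ j - x ^ (j + d)) y :=
    commute_sub_of_mul_add_mul_eq_one (by rw [← pow_add, ← pow_add, add_comm]) h hy
  have hpx : Commute (x ^ j - x ^ (j + d)) x :=
    (Commute.pow_self x j).sub_left (Commute.pow_self x _)
  have hkill : ∀ N, M ≤ N → x ^ N * e = 0 := fun N hN => by
    obtain ⟨t, rfl⟩ := Nat.exists_eq_add_of_le' hN
    rw [pow_add, mul_assoc, he, mul_zero]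
  obtain ⟨p, hp⟩ : ∃ p, p = x ^ j - x ^ (j + d) := ⟨_, rfl⟩
  obtain ⟨g, hg⟩ : ∃ g, g = ∑ l ∈ Finset.range M, (x ^ d) ^ l := ⟨_, rfl⟩
  rw [← hp] at hpy hpx
  have hpfac : p = x ^ j * (1 - x ^ d) := by rw [hp, pow_add, mul_sub, mul_one]
  have hae : x ^ j * e = p * g * e := by
    have hgeom : (1 - x ^ d) * g = 1 - (x ^ d) ^ M := by rw [hg]; exact mul_neg_geom_sum _ M
    rw [hpfac, mul_assoc (x ^ j), hgeom, mul_sub, mul_one, sub_mul, mul_assoc _ _ e, ← pow_mul,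
      hkill (d * M) (Nat.le_mul_of_pos_left M hd), mul_zero, sub_zero]
  obtain ⟨r, hr⟩ : ∃ r, r = x ^ d * g * y + y * g := ⟨_, rfl⟩
  have hpr : e = p * r * e := by
    calc e = (x ^ (j + d) * y + y * x ^ j) * e := by rw [h, one_mul]
      _ = x ^ d * (x ^ j * e) * y + y * (x ^ j * e) := by
          rw [add_mul, mul_assoc _ y e, ← hey.eq, add_comm j d, pow_add]; simp only [mul_assoc]
      _ = (x ^ d * p) * g * (e * y) + (y * p) * g * e := by rw [hae]; simp only [mul_assoc]
      _ = p * r * e := by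
          rw [← (hpx.pow_right d).eq, ← hpy.eq, hey.eq, hr]; noncomm_ring
  have hpg : Commute p g := by
    rw [hg]; exact Commute.sum_right _ _ _ fun l _ => (hpx.pow_right d).pow_right l
  have hprc : Commute p r := by
    rw [hr]
    exact (((hpx.pow_right d).mul_right hpg).mul_right hpy).add_right (hpy.mul_right hpg)
  have hiter : ∀ k, e = (p * r) ^ k * e := fun k => by
    induction k with
    | zero => simp
    | succ k ih => rw [pow_succ, mul_assoc, ← hpr, ← ih]
  have hpM : p ^ M * e = 0 := by
    have hc : Commute (x ^ j) (1 - x ^ d) :=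
      (Commute.one_right _).sub_right (Commute.pow_pow_self x j d)
    rw [hpfac, hc.mul_pow, (hc.pow_pow M M).eq, mul_assoc, ← pow_mul,
      hkill (j * M) (Nat.le_mul_of_pos_left M hj), mul_zero]
  rw [hiter M, hprc.mul_pow, (hprc.pow_pow M M).eq, mul_assoc, hpM, mul_zero]

/-- The consequences of the defining relations: `x` is a root of a monic polynomial of degree
`(2 * j + d - 1) * d` and has finite multiplicative order. -/
theorem geom_sum_eq_zero_and_exists_pow_eq_one {x y : R} {j d : ℕ} (hj : 1 ≤ j) (hd : 1 ≤ d)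
    (h : x ^ (j + d) * y + y * x ^ j = 1) (hy : y * y = 0) :
    ∑ l ∈ Finset.range (2 * j + d), (-x ^ d) ^ l = 0 ∧
      ∃ T, 1 ≤ T ∧ x ^ ((2 * j + d) * T) = 1 := by
  obtain ⟨k, hk⟩ : ∃ k, 2 * j + d = k + 1 := ⟨2 * j + d - 1, by omega⟩
  have hcy : Commute (x ^ (2 * j + d)) y := by
    have := commute_mul_of_mul_add_mul_eq_one (a := x ^ j) (b := x ^ (j + d)) (y := y)
      (by rw [← pow_add, ← pow_add, add_comm]) h hy
    rwa [← pow_add, ← add_assoc, ← two_mul] at this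
  have hxv : Commute x (-x ^ d) := (Commute.self_pow x d).neg_right
  have hq : (x ^ j) ^ k * ∑ l ∈ Finset.range (k + 1), (-x ^ d) ^ l = 0 := by
    refine pow_mul_geom_sum_eq_zero (y := y) (hxv.pow_left j) ?_ hy k ?_
    · rw [← h, pow_add]; noncomm_ring
    · rw [← pow_mul, mul_comm, pow_mul, ← hk]; exact hcy.pow_left j
  obtain ⟨w, hw⟩ : ∃ w, w = (-x ^ d) ^ (k + 1) := ⟨_, rfl⟩
  have hw' : w = (-1) ^ (k + 1) * (x ^ (k + 1)) ^ d := by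
    rw [hw, neg_pow, ← pow_mul, ← pow_mul, mul_comm d]
  have hwy : Commute w y := by
    rw [hw', ← hk]
    exact ((Commute.neg_one_left y).pow_left _).mul_left (hcy.pow_left d)
  rw [← pow_mul] at hq
  obtain ⟨M, hM⟩ : ∃ M, M = j * k := ⟨_, rfl⟩
  have hM1 : 1 ≤ M := by rw [hM]; exact Nat.mul_pos hj (by omega)
  rw [← hM] at hq
  have hxw : x ^ M * w = x ^ M := by
    have hgeom := geom_sum_mul_neg (-x ^ d) (k + 1)
    rw [← hw] at hgeom
    have := congrArg (x ^ M * ·) hgeom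
    simp only [← mul_assoc, hq, zero_mul, mul_sub, mul_one, sub_self] at this
    exact (sub_eq_zero.mp this.symm).symm
  have hxwk : ∀ n, x ^ M * w ^ n = x ^ M := fun n => by
    induction n with
    | zero => simp
    | succ n ih => rw [pow_succ, ← mul_assoc, ih, hxw]
  have hwM : w ^ M = 1 := by
    have := eq_zero_of_pow_mul_eq_zero (M := M) (e := 1 - w ^ M) hj hd h hy
      ((Commute.one_left _).sub_left (hwy.pow_left M)) (by rw [mul_sub, mul_one, hxwk, sub_self])
    exact (sub_eq_zero.mp this).symm
  have hx : x ^ ((2 * j + d) * (d * M * 2)) = 1 := by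
    have h2 : (w ^ M) ^ 2 = x ^ ((k + 1) * (d * M * 2)) := by
      rw [hw, ← pow_mul, ← pow_mul, ← mul_assoc, neg_pow, mul_comm _ 2, pow_mul (-1)]
      simp only [even_two, Even.neg_pow, one_pow, one_mul, ← pow_mul]
      congr 1; ring
    rw [hk, ← h2, hwM, one_pow]
  refine ⟨?_, d * M * 2, Nat.mul_pos (Nat.mul_pos hd hM1) two_pos, hx⟩
  have hu : IsUnit x := IsUnit.of_pow_eq_one hx
    (Nat.mul_pos (by omega) (Nat.mul_pos (Nat.mul_pos hd hM1) two_pos)).ne'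
  rw [hk]
  exact (hu.pow M).mul_right_eq_zero.mp hq

end Relations

section Span

variable {A R : Type*} [CommRing A] [Ring R] [Algebra A R]

theorem pow_mul_mem_of_pow_mul_mem {x z : R} {D : ℕ} (W : Submodule A R)
    (hD : x ^ D ∈ Submodule.span A {r | ∃ m < D, r = x ^ m})
    (hW : ∀ m < D, x ^ m * z ∈ W) (n : ℕ) : x ^ n * z ∈ W := by
  have hle : ∀ (n : ℕ), (∀ m < D, x ^ (n + m) * z ∈ W) → x ^ (n + D) * z ∈ W := by
    intro n hn
    have : Submodule.span A {r | ∃ m < D, r = x ^ m} ≤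
        W.comap (LinearMap.mulLeft A (x ^ n) ∘ₗ LinearMap.mulRight A z) := by
      rw [Submodule.span_le]
      rintro _ ⟨m, hm, rfl⟩
      simpa [pow_add, mul_assoc] using hn m hm
    simpa [pow_add, mul_assoc] using this hD
  induction n using Nat.strong_induction_on with
  | _ n ih =>
    rcases lt_or_ge n D with hn | hn
    · exact hW n hn
    · obtain ⟨t, rfl⟩ := Nat.exists_eq_add_of_le' hn
      exact hle t fun m hm => ih _ (by omega)

theorem pow_mem_span_of_geom_sum_eq_zero {x : R} {d n : ℕ} (hd : 1 ≤ d) (hn : 1 ≤ n)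
    (h : ∑ l ∈ Finset.range n, (-x ^ d) ^ l = 0) :
    x ^ ((n - 1) * d) ∈ Submodule.span A {r | ∃ m < (n - 1) * d, r = x ^ m} := by
  obtain ⟨k, rfl⟩ : ∃ k, n = k + 1 := ⟨n - 1, by omega⟩
  have hpow : ∀ l, (-x ^ d) ^ l = (-1 : A) ^ l • x ^ (l * d) := fun l => by
    rw [neg_pow, ← pow_mul, mul_comm d, Algebra.smul_def]; simp
  rw [Finset.sum_range_succ, add_comm, add_eq_zero_iff_eq_neg, hpow] at h
  have hmem : (-1 : A) ^ k • x ^ (k * d) ∈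
      Submodule.span A {r | ∃ m < k * d, r = x ^ m} := by
    rw [h]
    refine Submodule.neg_mem _ (Submodule.sum_mem _ fun l hl => ?_)
    rw [hpow]
    exact Submodule.smul_mem _ _ (Submodule.subset_span
      ⟨l * d, Nat.mul_lt_mul_of_pos_right (Finset.mem_range.mp hl) hd, rfl⟩)
  have := Submodule.smul_mem _ ((-1 : A) ^ k) hmem
  rwa [smul_smul, ← mul_pow, neg_one_mul, neg_neg, one_pow, one_smul] at this

/-- If `j` and `n` are coprime, stability under right multiplication by `x ^ j` and `x ^ n`
implies stability under right multiplication by `x`, when `x` has order dividing a multiple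
of `n`. -/
theorem mul_mem_of_coprime {x : R} {j n T : ℕ} (hn : 1 < n) (hT : 1 ≤ T) (hc : Nat.Coprime j n)
    (hx : x ^ (n * T) = 1) (W : Submodule A R) (hWj : ∀ r ∈ W, r * x ^ j ∈ W)
    (hWn : ∀ r ∈ W, r * x ^ n ∈ W) : ∀ r ∈ W, r * x ∈ W := by
  have hiter : ∀ (z : R), (∀ r ∈ W, r * z ∈ W) → ∀ k, ∀ r ∈ W, r * z ^ k ∈ W := by
    intro z hz k
    induction k with
    | zero => simp
    | succ k ih => intro r hr; rw [pow_succ, ← mul_assoc]; exact hz _ (ih r hr)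
  obtain ⟨k, -, hk⟩ := Nat.exists_mul_mod_eq_one_of_coprime hc hn
  have hjk : j * k = 1 + n * (j * k / n) := by
    conv_lhs => rw [← Nat.mod_add_div (j * k) n, hk]
  obtain ⟨l, hl⟩ : ∃ l, l = j * k / n := ⟨_, rfl⟩
  rw [← hl] at hjk
  have hxe : x = (x ^ j) ^ k * (x ^ n) ^ (l * (T - 1)) := by
    obtain ⟨t, rfl⟩ : ∃ t, T = t + 1 := ⟨T - 1, by omega⟩
    rw [← pow_mul, ← pow_mul, ← pow_add, hjk,
      show 1 + n * l + n * (l * (t + 1 - 1)) = 1 + n * (t + 1) * l by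
        rw [Nat.add_sub_cancel]; ring,
      pow_add, pow_mul, hx, one_pow, mul_one, pow_one]
  intro r hr
  rw [hxe, ← mul_assoc]
  exact hiter _ hWn _ _ (hiter _ hWj _ _ hr)

theorem span_pow_union_eq_top {x y : R} {j d : ℕ} (hj : 1 ≤ j) (hd : 1 ≤ d)
    (hc : Nat.Coprime j (2 * j + d)) (h : x ^ (j + d) * y + y * x ^ j = 1) (hy : y * y = 0)
    (hgen : Algebra.adjoin A {x, y} = ⊤) :
    Submodule.span A
      ({z : R | ∃ m < (2 * j + d - 1) * d, z = x ^ m} ∪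
       {z : R | ∃ m < (2 * j + d - 1) * d, z = x ^ m * y}) = ⊤ := by
  obtain ⟨hq, T, hT, hxT⟩ := geom_sum_eq_zero_and_exists_pow_eq_one hj hd h hy
  have hD := pow_mem_span_of_geom_sum_eq_zero (A := A) hd (by omega) hq
  obtain ⟨D, hDdef⟩ : ∃ D, D = (2 * j + d - 1) * d := ⟨_, rfl⟩
  rw [← hDdef] at hD ⊢
  obtain ⟨W, hWdef⟩ : ∃ W, W = Submodule.span A
      ({z : R | ∃ m < D, z = x ^ m} ∪ {z : R | ∃ m < D, z = x ^ m * y}) := ⟨_, rfl⟩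
  have hW1 : ∀ n, x ^ n ∈ W := fun n => by
    have := pow_mul_mem_of_pow_mul_mem (z := 1) W hD
      (fun m hm => by rw [hWdef]; exact Submodule.subset_span (Or.inl ⟨m, hm, mul_one _⟩)) n
    rwa [mul_one] at this
  have hWy : ∀ n, x ^ n * y ∈ W := pow_mul_mem_of_pow_mul_mem W hD
    fun m hm => by rw [hWdef]; exact Submodule.subset_span (Or.inr ⟨m, hm, rfl⟩)
  have hstable : ∀ z : R, (∀ n, x ^ n * z ∈ W) → (∀ n, x ^ n * y * z ∈ W) →
      ∀ r ∈ W, r * z ∈ W := by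
    intro z h1 h2 r hr
    have : W ≤ W.comap (LinearMap.mulRight A z) := by
      conv_lhs => rw [hWdef]
      rw [Submodule.span_le]
      rintro _ (⟨m, -, rfl⟩ | ⟨m, -, rfl⟩)
      · simpa using h1 m
      · simpa using h2 m
    exact this hr
  have hcy : Commute (x ^ (2 * j + d)) y := by
    have := commute_mul_of_mul_add_mul_eq_one (a := x ^ j) (b := x ^ (j + d)) (y := y)
      (by rw [← pow_add, ← pow_add, add_comm]) h hy
    rwa [← pow_add, ← add_assoc, ← two_mul] at this
  have hmx : ∀ r ∈ W, r * x ∈ W := by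
    refine mul_mem_of_coprime (by omega) hT hc hxT W (hstable _ ?_ ?_) (hstable _ ?_ ?_)
    · intro n; rw [← pow_add]; exact hW1 _
    · intro n
      rw [mul_assoc, eq_sub_of_add_eq' h, mul_sub, mul_one, ← mul_assoc, ← pow_add]
      exact Submodule.sub_mem _ (hW1 _) (hWy _)
    · intro n; rw [← pow_add]; exact hW1 _
    · intro n; rw [mul_assoc, ← hcy.eq, ← mul_assoc, ← pow_add]; exact hWy _
  have hmy : ∀ r ∈ W, r * y ∈ W :=
    hstable y hWy fun n => by rw [mul_assoc, hy, mul_zero]; exact W.zero_mem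
  have hall : ∀ s : R, ∀ r ∈ W, r * s ∈ W := by
    intro s
    have hs : s ∈ Algebra.adjoin A {x, y} := hgen ▸ Algebra.mem_top
    induction hs using Algebra.adjoin_induction with
    | mem z hz =>
      rcases hz with rfl | rfl
      · exact hmx
      · exact hmy
    | algebraMap a =>
      intro r hr
      rw [← Algebra.commutes, ← Algebra.smul_def]
      exact W.smul_mem a hr
    | add s t _ _ hs ht => intro r hr; rw [mul_add]; exact W.add_mem (hs r hr) (ht r hr)
    | mul s t _ _ hs ht => intro r hr; rw [← mul_assoc]; exact ht _ (hs r hr)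
  rw [← hWdef, eq_top_iff]
  intro s _
  simpa using hall s (x ^ 0) (hW1 0)

end Span

section MatRing

variable (A : Type*) [CommRing A] (i j : ℕ)

theorem Xgen_pow_mul_Ygen_add :
    Xgen A i j ^ i * Ygen A i j + Ygen A i j * Xgen A i j ^ j = 1 := by
  simpa [Xgen, Ygen] using RingQuot.mkAlgHom_rel A (MatRel.rel1 (A := A) (i := i) (j := j))

theorem Ygen_mul_self : Ygen A i j * Ygen A i j = 0 := by
  simpa [Ygen, pow_two] using RingQuot.mkAlgHom_rel A (MatRel.rel2 (A := A) (i := i) (j := j))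

theorem adjoin_Xgen_Ygen : Algebra.adjoin A {Xgen A i j, Ygen A i j} = ⊤ := by
  have hrange : ({Xgen A i j, Ygen A i j} : Set (MatRing A i j)) =
      RingQuot.mkAlgHom A (MatRel A i j) '' Set.range (FreeAlgebra.ι A) := by
    ext z
    simp [Xgen, Ygen, eq_comm]
  rw [hrange, ← AlgHom.map_adjoin, FreeAlgebra.adjoin_range_ι, Algebra.map_top,
    AlgHom.range_eq_top]
  exact RingQuot.mkAlgHom_surjective A _

end MatRing

theorem stmt9 (A : Type*) [CommRing A] (i j : ℕ) (hi : 1 ≤ i) (hj : 1 ≤ j)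
    (hij : i > j) (hgcd : Nat.gcd i j = 1) :
    Submodule.span A
      ({z : MatRing A i j | ∃ m < (i + j - 1) * (i - j), z = Xgen A i j ^ m} ∪
       {z : MatRing A i j | ∃ m < (i + j - 1) * (i - j), z = Xgen A i j ^ m * Ygen A i j}) = ⊤
    ∧ Module.Finite A (MatRing A i j) := by
  have hspan : Submodule.span A
      ({z : MatRing A i j | ∃ m < (i + j - 1) * (i - j), z = Xgen A i j ^ m} ∪
       {z : MatRing A i j | ∃ m < (i + j - 1) * (i - j), z = Xgen A i j ^ m * Ygen A i j}) =
      ⊤ := by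
    have hij' : 2 * j + (i - j) = i + j := by omega
    have hc : Nat.Coprime j (2 * j + (i - j)) := by
      rw [hij', Nat.coprime_add_self_right]
      exact Nat.Coprime.symm hgcd
    have := span_pow_union_eq_top (A := A) (x := Xgen A i j) (y := Ygen A i j) (d := i - j) hj
      (by omega) hc (by rw [Nat.add_sub_cancel' hij.le]; exact Xgen_pow_mul_Ygen_add A i j)
      (Ygen_mul_self A i j) (adjoin_Xgen_Ygen A i j)
    rwa [hij'] at this
  refine ⟨hspan, ⟨?_⟩⟩
  rw [← hspan]
  refine Submodule.fg_span (Set.Finite.union ?_ ?_)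
  · refine ((Set.finite_Iio ((i + j - 1) * (i - j))).image (Xgen A i j ^ ·)).subset ?_
    rintro _ ⟨m, hm, rfl⟩
    exact ⟨m, hm, rfl⟩
  · refine ((Set.finite_Iio ((i + j - 1) * (i - j))).image
      (Xgen A i j ^ · * Ygen A i j)).subset ?_
    rintro _ ⟨m, hm, rfl⟩
    exact ⟨m, hm, rfl⟩
end

section
/- For natural numbers i,j ≥ 1, there exist 2×2 matrices X, Y over the field ℚ of rational numbers satisfying X^i·Y + Y·X^j = 1 and Y² = 0 if and only if at least one of the following holds: (a) i = j and i is not divisible by 4; (b) i and j are both odd; (c) (i,j) is congruent mod 6 to one of (1,2), (2,1), (4,5), (5,4). -/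
open Matrix

/-- The Cayley–Hamilton identity for `2 × 2` matrices. -/
lemma sq_eq_trace_smul_sub_det {R : Type*} [CommRing R] (X : Matrix (Fin 2) (Fin 2) R) :
    X ^ 2 = X.trace • X - X.det • 1 := by
  ext a b
  fin_cases a <;> fin_cases b <;>
    simp [pow_two, Matrix.mul_apply, Fin.sum_univ_two, Matrix.trace_fin_two, Matrix.det_fin_two] <;>
    ring

lemma pow_add_two_eq {R : Type*} [CommRing R] (X : Matrix (Fin 2) (Fin 2) R) (n : ℕ) :
    X ^ (n + 2) = X.trace • X ^ (n + 1) - X.det • X ^ n := by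
  rw [pow_add, sq_eq_trace_smul_sub_det, mul_sub, mul_smul_comm, mul_smul_comm, mul_one, pow_succ]

lemma trace_pow_add_two {R : Type*} [CommRing R] (X : Matrix (Fin 2) (Fin 2) R) (n : ℕ) :
    (X ^ (n + 2)).trace = X.trace * (X ^ (n + 1)).trace - X.det * (X ^ n).trace := by
  rw [pow_add_two_eq]
  simp

lemma trace_sq_fin_two {R : Type*} [CommRing R] (X : Matrix (Fin 2) (Fin 2) R) :
    (X ^ 2).trace = X.trace ^ 2 - 2 * X.det := by
  have h := trace_pow_add_two X 0
  simp at h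
  rw [h]
  ring

lemma exists_pow_eq_smul_add_smul_one {R : Type*} [CommRing R] (X : Matrix (Fin 2) (Fin 2) R)
    (n : ℕ) : ∃ p q : R, X ^ n = p • X + q • (1 : Matrix (Fin 2) (Fin 2) R) := by
  induction n with
  | zero => exact ⟨0, 1, by simp⟩
  | succ n ih =>
    obtain ⟨p, q, h⟩ := ih
    refine ⟨p * X.trace + q, -(p * X.det), ?_⟩
    rw [pow_succ, h, add_mul, smul_mul_assoc, smul_mul_assoc, one_mul, ← pow_two,
      sq_eq_trace_smul_sub_det]
    module

lemma adjugate_eq_trace_smul_one_sub {R : Type*} [CommRing R] (A : Matrix (Fin 2) (Fin 2) R) :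
    A.adjugate = A.trace • 1 - A := by
  rw [Matrix.adjugate_fin_two]
  ext a b
  fin_cases a <;> fin_cases b <;> simp [Matrix.trace_fin_two]

section Necessity

variable {X Y : Matrix (Fin 2) (Fin 2) ℚ} {i j n : ℕ}

lemma mul_pow_mul_eq_self (h : X ^ i * Y + Y * X ^ j = 1) (hY : Y ^ 2 = 0) :
    Y * X ^ i * Y = Y ∧ Y * X ^ j * Y = Y := by
  rw [pow_two] at hY
  constructor
  · have := congrArg (Y * ·) h
    simpa [mul_add, ← mul_assoc, hY] using this
  · have := congrArg (· * Y) h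
    simpa [add_mul, mul_assoc, hY] using this

lemma ne_zero_of_mul_add_mul_eq_one (h : X ^ i * Y + Y * X ^ j = 1) : Y ≠ 0 := by
  rintro rfl
  simp at h

lemma pow_ne_smul_one (h : X ^ i * Y + Y * X ^ j = 1) (hY : Y ^ 2 = 0) (c : ℚ) :
    X ^ i ≠ c • 1 ∧ X ^ j ≠ c • 1 := by
  have hY0 := ne_zero_of_mul_add_mul_eq_one h
  obtain ⟨h1, h2⟩ := mul_pow_mul_eq_self h hY
  rw [pow_two] at hY
  constructor <;> intro hc
  · rw [hc] at h1
    simp [hY] at h1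
    exact hY0 h1.symm
  · rw [hc] at h2
    simp [hY] at h2
    exact hY0 h2.symm

/-- The two powers of `X` are related by `X ^ i = - adj (X ^ j)`. -/
lemma pow_add_adjugate_pow_eq_zero (h : X ^ i * Y + Y * X ^ j = 1) (hY : Y ^ 2 = 0) :
    X ^ i + (X ^ j).adjugate = 0 := by
  have hY0 := ne_zero_of_mul_add_mul_eq_one h
  have h1 := (mul_pow_mul_eq_self h hY).1
  have hYY : Y * Y = 0 := by rw [← pow_two, hY]
  have htr : Y.trace = 0 :=
    (Matrix.isNilpotent_trace_of_isNilpotent ⟨2, hY⟩).eq_zero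
  have hadjY : Y.adjugate = -Y := by
    rw [adjugate_eq_trace_smul_one_sub, htr, zero_smul, zero_sub]
  set A := X ^ i with hA
  set B := X ^ j with hB
  have hadj : Y * A.adjugate + B.adjugate * Y = -1 := by
    have h2 : (A * Y + Y * B).adjugate = (A * Y).adjugate + (Y * B).adjugate := by
      simp only [adjugate_eq_trace_smul_one_sub, Matrix.trace_add]
      module
    rw [h, Matrix.adjugate_one, Matrix.adjugate_mul_distrib, Matrix.adjugate_mul_distrib,
      hadjY] at h2
    rw [h2, neg_mul, mul_neg]
    abel
  set M := A + B.adjugate with hM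
  have hMadj : M.adjugate = A.adjugate + B := by
    simp only [hM, adjugate_eq_trace_smul_one_sub, Matrix.trace_add, Matrix.trace_sub,
      Matrix.trace_smul, Matrix.trace_one]
    simp
    module
  have hsum : M * Y = (M * Y).adjugate := by
    rw [Matrix.adjugate_mul_distrib, hadjY, hMadj, ← sub_eq_zero]
    calc M * Y - -Y * (A.adjugate + B)
        = (A * Y + Y * B) + (Y * A.adjugate + B.adjugate * Y) := by rw [hM]; noncomm_ring
      _ = 0 := by rw [h, hadj]; simp
  have hscal : M * Y = ((M * Y).trace / 2) • 1 := by
    have h3 := hsum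
    rw [adjugate_eq_trace_smul_one_sub] at h3
    have h4 : (2 : ℚ) • (M * Y) = (M * Y).trace • 1 := by
      rw [two_smul]; nth_rw 1 [h3]; simp
    rw [div_eq_inv_mul, mul_smul, ← h4, smul_smul]
    norm_num
  have hMY : M * Y = 0 := by
    have h5 : ((M * Y).trace / 2) • Y = 0 := by
      have h6 : M * Y * Y = 0 := by rw [mul_assoc, hYY, mul_zero]
      rw [hscal] at h6
      simpa using h6
    rw [hscal, (smul_eq_zero.mp h5).resolve_right hY0, zero_smul]
  obtain ⟨p, q, hp⟩ := exists_pow_eq_smul_add_smul_one X i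
  obtain ⟨r, s, hr⟩ := exists_pow_eq_smul_add_smul_one X j
  have hMX : M = (p - r) • X + (q + B.trace - s) • (1 : Matrix (Fin 2) (Fin 2) ℚ) := by
    rw [hM, adjugate_eq_trace_smul_one_sub, hA, hp]
    nth_rw 2 [hB]
    rw [hr]
    module
  have hYXY : p • (Y * X * Y) = Y := by
    rw [hA, hp] at h1
    simpa [mul_add, add_mul, hYY] using h1
  have hα : p - r = 0 := by
    have h7 : Y * M * Y = 0 := by rw [mul_assoc, hMY, mul_zero]
    rw [hMX] at h7
    simp only [mul_add, add_mul, mul_smul_comm, smul_mul_assoc, mul_one, hYY, smul_zero,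
      add_zero] at h7
    have h8 : (p - r) • Y = 0 := by
      rw [← hYXY, smul_comm, h7, smul_zero]
    exact (smul_eq_zero.mp h8).resolve_right hY0
  rw [hα, zero_smul, zero_add] at hMX
  rw [hMX] at hMY
  have h9 : (q + B.trace - s) • Y = 0 := by simpa using hMY
  rw [hMX, (smul_eq_zero.mp h9).resolve_right hY0, zero_smul]

lemma pow_add_eq_neg_det_pow_smul (h : X ^ i * Y + Y * X ^ j = 1) (hY : Y ^ 2 = 0) :
    X ^ (i + j) = -(X.det ^ j) • 1 := by
  rw [pow_add, eq_neg_of_add_eq_zero_left (pow_add_adjugate_pow_eq_zero h hY), neg_mul,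
    Matrix.adjugate_mul, Matrix.det_pow, neg_smul]

lemma det_pow_eq_det_pow (h : X ^ i * Y + Y * X ^ j = 1) (hY : Y ^ 2 = 0) :
    X.det ^ i = X.det ^ j := by
  rw [← Matrix.det_pow, eq_neg_of_add_eq_zero_left (pow_add_adjugate_pow_eq_zero h hY),
    Matrix.det_neg, Matrix.det_adjugate, Matrix.det_pow]
  simp

/-- A rational matrix of determinant one having `-1` as a power has integral trace. -/
lemma exists_int_trace_eq (hdet : X.det = 1) (hn : 1 ≤ n) (hX : X ^ n = -1) :
    ∃ t : ℤ, X.trace = t := by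
  set a : ℤ := X.trace.num with ha
  set b : ℤ := (X.trace.den : ℤ) with hb
  have hb0 : (b : ℚ) ≠ 0 := by simp [hb]
  have hab : (b : ℚ) * X.trace = a := by
    rw [ha, hb]
    push_cast
    exact Rat.den_mul_eq_num _
  have key : ∀ m : ℕ, ∃ c d : ℤ, (b : ℚ) ^ m * (X ^ m).trace = c ∧
      (b : ℚ) ^ (m + 1) * (X ^ (m + 1)).trace = (a : ℚ) ^ (m + 1) + b * d := by
    intro m
    induction m with
    | zero => exact ⟨2, 0, by simp, by simp [hab]⟩
    | succ m ih =>
      obtain ⟨c, d, h1, h2⟩ := ih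
      refine ⟨a ^ (m + 1) + b * d, a * d - b * c, by push_cast; exact h2, ?_⟩
      rw [trace_pow_add_two, hdet]
      push_cast
      rw [← h1]
      linear_combination (a : ℚ) * h2 + (b : ℚ) ^ (m + 1) * (X ^ (m + 1)).trace * hab
  obtain ⟨m, rfl⟩ : ∃ m, n = m + 1 := ⟨n - 1, by omega⟩
  obtain ⟨-, d, -, h2⟩ := key m
  rw [hX] at h2
  simp at h2
  have h3 : (b : ℤ) ∣ a ^ (m + 1) := by
    refine ⟨-(2 * b ^ m) - d, ?_⟩
    have : (a : ℚ) ^ (m + 1) = b * (-(2 * b ^ m) - d) := by linear_combination -h2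
    exact_mod_cast this
  have hcop : IsCoprime b (a ^ (m + 1)) := by
    apply IsCoprime.pow_right
    rw [Int.isCoprime_iff_nat_coprime, ha, hb]
    simpa using X.trace.reduced.symm
  have hunit : IsUnit b := hcop.isUnit_of_dvd' dvd_rfl h3
  have hb1 : b = 1 := by
    rcases Int.isUnit_iff.mp hunit with h | h
    · exact h
    · omega
  exact ⟨a, by simpa [hb1] using hab⟩

lemma abs_trace_lt_three (hdet : X.det = 1) (hn : 1 ≤ n) (hX : X ^ n = -1) :
    |X.trace| < 3 := by
  by_contra! h3
  have key : ∀ m : ℕ, |(X ^ m).trace| ≤ |(X ^ (m + 1)).trace| ∧ 3 ≤ |(X ^ (m + 1)).trace| := by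
    intro m
    induction m with
    | zero =>
      simp only [pow_zero, zero_add, pow_one, Matrix.trace_one]
      norm_num
      constructor <;> linarith
    | succ m ih =>
      obtain ⟨h1, h2⟩ := ih
      have h4 : |X.trace * (X ^ (m + 1)).trace| - |(X ^ m).trace| ≤ |(X ^ (m + 2)).trace| := by
        rw [trace_pow_add_two, hdet, one_mul]
        exact abs_sub_abs_le_abs_sub _ _
      rw [abs_mul] at h4
      have h5 : 3 * |(X ^ (m + 1)).trace| ≤ |X.trace| * |(X ^ (m + 1)).trace| := by gcongr
      constructor <;> linarith
  obtain ⟨m, rfl⟩ : ∃ m, n = m + 1 := ⟨n - 1, by omega⟩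
  have h := (key m).2
  rw [hX] at h
  norm_num at h

lemma eq_smul_one_of_pow_eq_neg_one {e : ℚ} (he : e ^ 2 = 1) (hdet : X.det = 1)
    (htr : X.trace = 2 * e) (hn : 1 ≤ n) (hX : X ^ n = -1) : ∃ c : ℚ, X = c • 1 := by
  have he0 : e ≠ 0 := by rintro rfl; norm_num at he
  have key : ∀ m : ℕ, X ^ (m + 1) = (e ^ m * (m + 1)) • X -
      (e ^ (m + 1) * m) • (1 : Matrix (Fin 2) (Fin 2) ℚ) := by
    intro m
    induction m with
    | zero => simp
    | succ m ih =>
      rw [pow_succ, ih, sub_mul, smul_mul_assoc, smul_mul_assoc, one_mul, ← pow_two,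
        sq_eq_trace_smul_sub_det, hdet, htr, smul_sub, smul_smul, smul_smul]
      have h1 : e ^ (m + 1 + 1) = e ^ m := by rw [pow_add, pow_add]; linear_combination e ^ m * he
      rw [h1]
      push_cast
      module
  obtain ⟨m, rfl⟩ : ∃ m, n = m + 1 := ⟨n - 1, by omega⟩
  have hc : e ^ m * ((m : ℚ) + 1) ≠ 0 := by positivity
  have h := key m
  rw [hX] at h
  refine ⟨(e ^ m * ((m : ℚ) + 1))⁻¹ * (e ^ (m + 1) * m - 1), ?_⟩
  have h2 : (e ^ m * ((m : ℚ) + 1)) • X = (e ^ (m + 1) * m - 1) • 1 := by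
    rw [sub_smul, one_smul, sub_eq_add_neg, h]
    abel
  rw [mul_smul, ← h2, smul_smul, inv_mul_cancel₀ hc, one_smul]

/-- The crystallographic restriction for elements of `SL₂(ℚ)` having `-1` as a power. -/
lemma trace_mem_or_eq_smul_one (hdet : X.det = 1) (hn : 1 ≤ n) (hX : X ^ n = -1) :
    X.trace = -1 ∨ X.trace = 0 ∨ X.trace = 1 ∨ ∃ c : ℚ, X = c • 1 := by
  obtain ⟨t, ht⟩ := exists_int_trace_eq hdet hn hX
  have h := abs_trace_lt_three hdet hn hX
  rw [ht] at h
  have h' : |t| < 3 := by exact_mod_cast h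
  rw [abs_lt] at h'
  obtain ⟨h1, h2⟩ := h'
  interval_cases t
  · exact .inr <| .inr <| .inr <|
      eq_smul_one_of_pow_eq_neg_one (e := -1) (by norm_num) hdet (by rw [ht]; norm_num) hn hX
  · left; rw [ht]; norm_num
  · right; left; rw [ht]; norm_num
  · right; right; left; rw [ht]; norm_num
  · exact .inr <| .inr <| .inr <|
      eq_smul_one_of_pow_eq_neg_one (e := 1) (by norm_num) hdet (by rw [ht]; norm_num) hn hX

lemma pow_ne_smul_one_base (hX : ∀ c : ℚ, X ^ i ≠ c • 1) (c : ℚ) : X ≠ c • 1 := by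
  rintro rfl
  exact hX (c ^ i) (by rw [smul_pow, one_pow])

lemma residues_of_det_eq_one (hdet : X.det = 1) (hij : 1 ≤ i + j) (hX : X ^ (i + j) = -1)
    (hXi : ∀ c : ℚ, X ^ i ≠ c • 1) (hXj : ∀ c : ℚ, X ^ j ≠ c • 1) :
    (Odd i ∧ Odd j) ∨
      (i % 6 = 1 ∧ j % 6 = 2) ∨ (i % 6 = 2 ∧ j % 6 = 1) ∨
      (i % 6 = 4 ∧ j % 6 = 5) ∨ (i % 6 = 5 ∧ j % 6 = 4) := by
  have hne : (1 : Matrix (Fin 2) (Fin 2) ℚ) ≠ -1 := by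
    intro h
    have := congrFun (congrFun h 0) 0
    norm_num at this
  have hsq := sq_eq_trace_smul_sub_det X
  have not_dvd : ∀ {k m : ℕ} {c : ℚ}, X ^ m = c • 1 → (∀ c : ℚ, X ^ k ≠ c • 1) → ¬ m ∣ k := by
    rintro k m c hm hk ⟨l, rfl⟩
    exact hk (c ^ l) (by rw [pow_mul, hm, smul_pow, one_pow])
  rcases trace_mem_or_eq_smul_one hdet hij hX with ht | ht | ht | ⟨c, hc⟩
  · rw [hdet, ht] at hsq
    have h3 : X ^ 3 = 1 := by
      rw [pow_succ, hsq, sub_mul, smul_mul_assoc, smul_mul_assoc, ← pow_two, hsq]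
      simp
    exfalso
    apply hne
    calc (1 : Matrix (Fin 2) (Fin 2) ℚ) = (X ^ 3) ^ (i + j) := by rw [h3, one_pow]
      _ = (X ^ (i + j)) ^ 3 := by rw [← pow_mul, ← pow_mul, mul_comm]
      _ = -1 := by rw [hX]; simp [pow_succ]
  · rw [hdet, ht] at hsq
    have h2 : X ^ 2 = (-1 : ℚ) • 1 := by rw [hsq]; simp
    have h2i := not_dvd h2 hXi
    have h2j := not_dvd h2 hXj
    left
    rw [Nat.odd_iff, Nat.odd_iff]
    omega
  · rw [hdet, ht] at hsq
    have h3 : X ^ 3 = (-1 : ℚ) • 1 := by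
      rw [pow_succ, hsq, sub_mul, smul_mul_assoc, smul_mul_assoc, ← pow_two, hsq]
      simp
    have h3i := not_dvd h3 hXi
    have h3j := not_dvd h3 hXj
    have h3n : (i + j) % 6 ≠ 0 := by
      intro h0
      obtain ⟨l, hl⟩ := Nat.dvd_of_mod_eq_zero h0
      apply hne
      rw [← hX, hl, show 6 * l = 3 * 2 * l by ring, pow_mul, pow_mul, h3]
      simp
    have hn3 : 3 ∣ i + j := by
      by_contra hnd
      have hX0 := pow_ne_smul_one_base hXi
      have hdm := Nat.div_add_mod (i + j) 3
      set l := (i + j) / 3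
      have h1 : (i + j) % 3 = 1 ∨ (i + j) % 3 = 2 := by omega
      rcases h1 with h1 | h1 <;> rw [h1] at hdm
      · have h4 : (-1 : ℚ) ^ l • X = (-1 : ℚ) • 1 := by
          rw [← hdm, pow_add, pow_mul, h3, smul_pow, one_pow, pow_one, smul_mul_assoc,
            one_mul] at hX
          rw [hX]
          simp
        apply hX0 ((-1) ^ l * -1)
        rw [mul_smul, ← h4, smul_smul, ← mul_pow]
        simp
      · have h4 : X ^ (i + j) * X = (-1 : ℚ) ^ (l + 1) • 1 := by
          rw [← pow_succ, ← hdm, show 3 * l + 2 + 1 = 3 * (l + 1) by ring, pow_mul, h3, smul_pow,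
            one_pow]
        rw [hX, neg_one_mul] at h4
        apply hX0 (-(-1) ^ (l + 1))
        rw [neg_smul, ← h4, neg_neg]
    right
    omega
  · exact absurd hc (pow_ne_smul_one_base hXi c)

lemma not_four_dvd_of_pow_add_self (hX : X ^ (i + i) = -(X.det ^ i) • 1)
    (hXi : ∀ c : ℚ, X ^ i ≠ c • 1) : ¬ 4 ∣ i := by
  rintro ⟨k, rfl⟩
  set V := X ^ k with hV
  have hV4 : X ^ (4 * k) = V ^ 4 := by rw [hV, ← pow_mul, mul_comm]
  rw [hV4] at hXi
  have htr2 := trace_sq_fin_two V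
  have htr4 := trace_sq_fin_two (V ^ 2)
  rw [← pow_mul, Matrix.det_pow, htr2] at htr4
  have hV8 : (V ^ 4) ^ 2 = -(V.det ^ 4) • 1 := by
    rw [← hV4, ← pow_mul, mul_two, hX, hV, Matrix.det_pow, ← pow_mul, mul_comm]
  have hV0 : V ^ 4 ≠ 0 := by simpa using hXi 0
  have htr0 : (V ^ 4).trace = 0 := by
    have h := sq_eq_trace_smul_sub_det (V ^ 4)
    rw [hV8, Matrix.det_pow V 4, neg_smul, eq_comm, sub_eq_neg_self] at h
    exact (smul_eq_zero.mp h).resolve_right hV0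
  have hroot : (V.trace ^ 2 - 2 * V.det) ^ 2 = 2 * V.det ^ 2 := by
    linear_combination htr0 - htr4
  have hd : V.det = 0 := by
    by_contra hd
    have hsq : IsSquare (2 : ℚ) :=
      ⟨(V.trace ^ 2 - 2 * V.det) / V.det, by field_simp; linear_combination -hroot⟩
    have hn : ¬ IsSquare (2 : ℚ) := by decide +kernel
    exact hn hsq
  rw [hd] at hroot
  have ht : V.trace = 0 := by simpa using hroot
  have hV2 := sq_eq_trace_smul_sub_det V
  rw [hd, ht, zero_smul, zero_smul, sub_zero] at hV2
  exact hV0 (by rw [show 4 = 2 * 2 from rfl, pow_mul, hV2]; simp)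

lemma eq_one_of_pow_ne_smul_one (hX : X ^ 2 = 0) (hi : 1 ≤ i) (hXi : ∀ c : ℚ, X ^ i ≠ c • 1) :
    i = 1 := by
  by_contra h1
  exact hXi 0 (by rw [zero_smul, pow_eq_zero_of_le (show 2 ≤ i by omega) hX])

lemma both_odd_of_det_eq_neg_one (hdet : X.det = -1) (hd : X.det ^ i = X.det ^ j) (hi : 1 ≤ i)
    (hX : X ^ (i + j) = -(X.det ^ j) • 1) (hXi : ∀ c : ℚ, X ^ i ≠ c • 1) :
    Odd i ∧ Odd j := by
  rw [hdet] at hd hX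
  rcases Nat.even_or_odd j with hj | hj
  · exfalso
    rcases Nat.even_or_odd i with hi' | hi'
    · obtain ⟨k, rfl⟩ := hi'
      obtain ⟨l, rfl⟩ := hj
      rw [← two_mul, ← two_mul, ← mul_add, pow_mul, pow_mul] at hX
      rw [← two_mul, pow_mul] at hXi
      norm_num at hX
      have hdet2 : (X ^ 2).det = 1 := by rw [Matrix.det_pow, hdet]; norm_num
      have ht := trace_sq_fin_two X
      rw [hdet] at ht
      have hnn := sq_nonneg X.trace
      rcases trace_mem_or_eq_smul_one hdet2 (show 1 ≤ k + l by omega) hX with h | h | h | ⟨c, hc⟩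
      · linarith
      · linarith
      · linarith
      · exact pow_ne_smul_one_base hXi c hc
    · rw [hi'.neg_one_pow, hj.neg_one_pow] at hd
      norm_num at hd
  · refine ⟨?_, hj⟩
    by_contra hi'
    rw [Nat.not_odd_iff_even] at hi'
    rw [hi'.neg_one_pow, hj.neg_one_pow] at hd
    norm_num at hd

lemma residues_of_mul_add_mul_eq_one (hi : 1 ≤ i) (hj : 1 ≤ j)
    (h : X ^ i * Y + Y * X ^ j = 1) (hY : Y ^ 2 = 0) :
    (i = j ∧ ¬ (4 ∣ i)) ∨ (Odd i ∧ Odd j) ∨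
      (i % 6 = 1 ∧ j % 6 = 2) ∨ (i % 6 = 2 ∧ j % 6 = 1) ∨
      (i % 6 = 4 ∧ j % 6 = 5) ∨ (i % 6 = 5 ∧ j % 6 = 4) := by
  have hX := pow_add_eq_neg_det_pow_smul h hY
  have hd := det_pow_eq_det_pow h hY
  have hXi := fun c => (pow_ne_smul_one h hY c).1
  have hXj := fun c => (pow_ne_smul_one h hY c).2
  rcases eq_or_ne i j with rfl | hij
  · exact .inl ⟨rfl, not_four_dvd_of_pow_add_self hX hXi⟩
  right
  rcases eq_or_ne X.det 0 with h0 | h0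
  · rw [h0, zero_pow (by omega), neg_zero, zero_smul] at hX
    have ht : X.trace = 0 := (Matrix.isNilpotent_trace_of_isNilpotent ⟨_, hX⟩).eq_zero
    have hX2 := sq_eq_trace_smul_sub_det X
    rw [h0, ht, zero_smul, zero_smul, sub_zero] at hX2
    exact absurd ((eq_one_of_pow_ne_smul_one hX2 hi hXi).trans
      (eq_one_of_pow_ne_smul_one hX2 hj hXj).symm) hij
  have habs : |X.det| = 1 := by
    by_contra hne
    have hinj := pow_right_injective₀ (abs_pos.mpr h0) hne
    exact hij (hinj (by simp only [← abs_pow, hd]))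
  rcases eq_or_eq_neg_of_abs_eq habs with h1 | h1
  · exact residues_of_det_eq_one h1 (by omega) (by rw [hX, h1]; simp) hXi hXj
  · exact .inl (both_odd_of_det_eq_neg_one h1 hd hi hX hXi)

end Necessity

section Sufficiency

/-- If the lower left entries of `X ^ i` and `X ^ j` agree and are nonzero, a multiple of the
matrix unit `E₁₂` solves the equation as soon as the remaining entries cancel. -/
lemma exists_sq_eq_zero_of_entries {X : Matrix (Fin 2) (Fin 2) ℚ} {i j : ℕ} {a b d a' b' d' c : ℚ}
    (hc : c ≠ 0) (hi : X ^ i = !![a, b; c, d]) (hj : X ^ j = !![a', b'; c, d'])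
    (had : a + d' = 0) :
    ∃ X Y : Matrix (Fin 2) (Fin 2) ℚ, X ^ i * Y + Y * X ^ j = 1 ∧ Y ^ 2 = 0 := by
  refine ⟨X, !![0, c⁻¹; 0, 0], ?_, ?_⟩
  · rw [hi, hj]
    ext k l
    fin_cases k <;> fin_cases l <;> simp [hc]
    rw [mul_comm, ← mul_add, had, mul_zero]
  · rw [pow_two]
    ext k l
    fin_cases k <;> fin_cases l <;> simp

lemma swap_pow_of_odd {n : ℕ} (hn : Odd n) :
    (!![0, 1; 1, 0] : Matrix (Fin 2) (Fin 2) ℚ) ^ n = !![0, 1; 1, 0] := by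
  obtain ⟨k, rfl⟩ := hn
  have h : (!![0, 1; 1, 0] : Matrix (Fin 2) (Fin 2) ℚ) ^ 2 = 1 := by
    rw [pow_two, Matrix.one_fin_two]
    simp
  rw [pow_succ, pow_mul, h, one_pow, one_mul]

lemma pow_four_mul_add_two (k : ℕ) :
    (!![1, -1; 1, 1] : Matrix (Fin 2) (Fin 2) ℚ) ^ (4 * k + 2) =
      !![0, -2 * (-4) ^ k; 2 * (-4) ^ k, 0] := by
  have h2 : (!![1, -1; 1, 1] : Matrix (Fin 2) (Fin 2) ℚ) ^ 2 = !![0, -2; 2, 0] := by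
    rw [pow_two]
    norm_num
  have h4 : (!![1, -1; 1, 1] : Matrix (Fin 2) (Fin 2) ℚ) ^ 4 = (-4 : ℚ) • 1 := by
    rw [show 4 = 2 * 2 from rfl, pow_mul, h2, pow_two, Matrix.one_fin_two]
    norm_num
  rw [pow_add, pow_mul, h4, h2, smul_pow, one_pow, smul_mul_assoc, one_mul]
  simp [mul_comm]

lemma pow_eq_pow_mod_six (n : ℕ) :
    (!![0, -1; 1, 1] : Matrix (Fin 2) (Fin 2) ℚ) ^ n = !![0, -1; 1, 1] ^ (n % 6) := by
  refine pow_eq_pow_mod n ?_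
  rw [Matrix.one_fin_two]
  simp [pow_succ]

end Sufficiency

theorem stmt19 (i j : ℕ) (hi : 1 ≤ i) (hj : 1 ≤ j) :
    (∃ X Y : Matrix (Fin 2) (Fin 2) ℚ, X ^ i * Y + Y * X ^ j = 1 ∧ Y ^ 2 = 0) ↔
      (i = j ∧ ¬ (4 ∣ i)) ∨ (Odd i ∧ Odd j) ∨
      (i % 6 = 1 ∧ j % 6 = 2) ∨ (i % 6 = 2 ∧ j % 6 = 1) ∨
      (i % 6 = 4 ∧ j % 6 = 5) ∨ (i % 6 = 5 ∧ j % 6 = 4) := by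
  constructor
  · rintro ⟨X, Y, h, hY⟩
    exact residues_of_mul_add_mul_eq_one hi hj h hY
  have of_odd (hi : Odd i) (hj : Odd j) :
      ∃ X Y : Matrix (Fin 2) (Fin 2) ℚ, X ^ i * Y + Y * X ^ j = 1 ∧ Y ^ 2 = 0 :=
    exists_sq_eq_zero_of_entries one_ne_zero (swap_pow_of_odd hi) (swap_pow_of_odd hj)
      (by norm_num)
  have hp1 : (!![0, -1; 1, 1] : Matrix (Fin 2) (Fin 2) ℚ) ^ 1 = !![0, -1; 1, 1] := pow_one _
  have hp2 : (!![0, -1; 1, 1] : Matrix (Fin 2) (Fin 2) ℚ) ^ 2 = !![-1, -1; 1, 0] := by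
    simp [pow_succ]
  have hp4 : (!![0, -1; 1, 1] : Matrix (Fin 2) (Fin 2) ℚ) ^ 4 = !![0, 1; -1, -1] := by
    simp [pow_succ]
  have hp5 : (!![0, -1; 1, 1] : Matrix (Fin 2) (Fin 2) ℚ) ^ 5 = !![1, 1; -1, 0] := by
    simp [pow_succ]
  rintro (⟨rfl, h4⟩ | ⟨hi', hj'⟩ | ⟨hi', hj'⟩ | ⟨hi', hj'⟩ | ⟨hi', hj'⟩ | ⟨hi', hj'⟩)
  · rcases Nat.even_or_odd i with he | ho
    · obtain ⟨k, rfl⟩ : ∃ k, i = 4 * k + 2 := ⟨i / 4, by rw [Nat.even_iff] at he; omega⟩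
      exact exists_sq_eq_zero_of_entries (by positivity) (pow_four_mul_add_two k)
        (pow_four_mul_add_two k) (by norm_num)
    · exact of_odd ho ho
  · exact of_odd hi' hj'
  · exact exists_sq_eq_zero_of_entries one_ne_zero (by rw [pow_eq_pow_mod_six, hi', hp1])
      (by rw [pow_eq_pow_mod_six, hj', hp2]) (by norm_num)
  · exact exists_sq_eq_zero_of_entries one_ne_zero (by rw [pow_eq_pow_mod_six, hi', hp2])
      (by rw [pow_eq_pow_mod_six, hj', hp1]) (by norm_num)
  · exact exists_sq_eq_zero_of_entries (c := -1) (by norm_num) (by rw [pow_eq_pow_mod_six, hi', hp4])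
      (by rw [pow_eq_pow_mod_six, hj', hp5]) (by norm_num)
  · exact exists_sq_eq_zero_of_entries (c := -1) (by norm_num) (by rw [pow_eq_pow_mod_six, hi', hp5])
      (by rw [pow_eq_pow_mod_six, hj', hp4]) (by norm_num)
end
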